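/- arXiv:2502.13692 — 3 statements merged into one kernel-verified Lean document; each statement's English description precedes it below -/
import Mathlib

section
/- There is a constant c > 0 such that for every dimension d ≥ 1, every sample size n ≥ 1, every 0 < δ < 1, and every probability distribution D over B_2^d × {−1,1}, with probability at least 1 − δ over a training set S = ((x_1,y_1),…,(x_n,y_n)) drawn i.i.d. from D, it holds simultaneously for every unit vector w ∈ S^{d−1} and every margin γ with n^{−1/2} ≤ γ ≤ 1 that L_D(w) ≤ L_S^γ(w) + c·( sqrt( L_S^γ(w)·( ln(e/L_S^γ(w))/(γ²n) + ln(e/δ)/n ) ) + ln(e·γ²n)/(γ²n) + ln(e/δ)/n ). -/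
open MeasureTheory ProbabilityTheory

noncomputable section

/-- Dot product on `Fin m → ℝ`. -/
def dotp {m : ℕ} (w x : Fin m → ℝ) : ℝ := ∑ j, w j * x j

/-- Margin loss `L_D^γ(w)` of `w` under a distribution `D` on `ℝ^m × ℝ`
(labels are encoded as reals in `{-1,1}`). -/
def lossD {m : ℕ} (D : Measure ((Fin m → ℝ) × ℝ)) (γ : ℝ) (w : Fin m → ℝ) : ℝ :=
  (D {p | p.2 * dotp w p.1 ≤ γ}).toReal

/-- Empirical margin loss `L_S^γ(w)` on a training set `S` of `n` labeled points. -/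
def lossS {m n : ℕ} (S : Fin n → (Fin m → ℝ) × ℝ) (γ : ℝ) (w : Fin m → ℝ) : ℝ :=
  (Nat.card {i : Fin n // (S i).2 * dotp w (S i).1 ≤ γ} : ℝ) / n

/-- The i.i.d. sample measure `D^n` over training sets of size `n`. -/
def trainM {m : ℕ} (D : Measure ((Fin m → ℝ) × ℝ)) (n : ℕ) :
    Measure (Fin n → (Fin m → ℝ) × ℝ) := Measure.pi fun _ => D

/-- Spacing of the rounding grid: `(10 √k)⁻¹`. -/
def gridStep (k : ℕ) : ℝ := (10 * Real.sqrt k)⁻¹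

/-- The largest grid point `(1/2)(10√k)⁻¹ + z(10√k)⁻¹ ≤ g`. -/
def roundDown (k : ℕ) (g : ℝ) : ℝ :=
  gridStep k / 2 + (⌊(g - gridStep k / 2) / gridStep k⌋ : ℝ) * gridStep k

/-- The probability `p(z)` of rounding `g` down, chosen so the rounding is unbiased. -/
def roundProb (k : ℕ) (g : ℝ) : ℝ := 1 - (g - roundDown k g) / gridStep k

/-- Matrix-vector product, `(Aw)_i = ∑ j A i j * w j`. -/
def matVec {k m : ℕ} (A : Fin k → Fin m → ℝ) (w : Fin m → ℝ) : Fin k → ℝ :=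
  fun i => ∑ j, A i j * w j

/-- The randomized rounding `h_{A,t}(w)` of `Aw` to the grid. -/
def hRound {k m : ℕ} (A : Fin k → Fin m → ℝ) (t : Fin k → ℝ) (w : Fin m → ℝ) :
    Fin k → ℝ :=
  fun i => if t i ≤ roundProb k (matVec A w i)
    then roundDown k (matVec A w i)
    else roundDown k (matVec A w i) + gridStep k

/-- The joint law of `(A, t)`: `A` has i.i.d. `N(0,1/k)` entries and `t` has i.i.d.
uniform `[0,1]` coordinates, independent of `A`. -/
def roundMeasure (k m : ℕ) : Measure ((Fin k → Fin m → ℝ) × (Fin k → ℝ)) :=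
  (Measure.pi fun _ : Fin k => Measure.pi fun _ : Fin m =>
      gaussianReal 0 (k : NNReal)⁻¹).prod
    (Measure.pi fun _ : Fin k => volume.restrict (Set.Icc (0 : ℝ) 1))

/-- Reduced setup: the data domain `X ⊆ S^d ⊂ ℝ^{d+1}` of unit vectors whose first
`d` coordinates have norm at most `cγ`. -/
def Xset (d : ℕ) (cγ : ℝ) : Set (Fin (d+1) → ℝ) :=
  {x | (∑ j, x j ^ 2) = 1 ∧ (∑ j : Fin d, x j.castSucc ^ 2) ≤ cγ ^ 2}

/-- Reduced setup: the hypothesis class `H = S^{d-1} × {0} ⊂ ℝ^{d+1}`. -/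
def Hset (d : ℕ) : Set (Fin (d+1) → ℝ) :=
  {w | (∑ j, w j ^ 2) = 1 ∧ w (Fin.last d) = 0}

/-- `γ_i = 2^{i-1} n^{-1/2}`. -/
def γlo (n i : ℕ) : ℝ := 2 ^ (i - 1) / Real.sqrt n

/-- `γ_{i+1} = 2^i n^{-1/2}`. -/
def γhi (n i : ℕ) : ℝ := 2 ^ i / Real.sqrt n

/-- `ℓ_{j+1} = 2^j n^{-1}`. -/
def ellhi (n j : ℕ) : ℝ := 2 ^ j / n

/-- The interval `L_j`: `L_0 = [0, n⁻¹]`, and `L_j = (2^{j-1}/n, 2^j/n]` for `j ≥ 1`. -/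
def Lset (n j : ℕ) : Set ℝ :=
  if j = 0 then Set.Icc 0 (n : ℝ)⁻¹
  else Set.Ioc ((2 : ℝ) ^ (j - 1) / n) ((2 : ℝ) ^ j / n)

/-- Margin loss of `h ∈ ℝ^k` under the pushforward distribution `A·D`. -/
def kLossD {k m : ℕ} (D : Measure ((Fin m → ℝ) × ℝ)) (γ : ℝ) (h : Fin k → ℝ)
    (A : Fin k → Fin m → ℝ) : ℝ :=
  (D {q | q.2 * (∑ r, h r * ∑ s, A r s * q.1 s) ≤ γ}).toReal

/-- Empirical margin loss of `h ∈ ℝ^k` on the transformed training set `A·S`. -/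
def kLossS {k m n : ℕ} (S : Fin n → (Fin m → ℝ) × ℝ) (γ : ℝ) (h : Fin k → ℝ)
    (A : Fin k → Fin m → ℝ) : ℝ :=
  (Nat.card {i : Fin n // (S i).2 * (∑ r, h r * ∑ s, A r s * (S i).1 s) ≤ γ} : ℝ) / n

/-- Specification of the function `φ` from the paper, for margin parameter `γi`:
on `[-cγ, 0]` it equals the probability (over the randomized rounding) that the rounded
margin exceeds `γi/2` given original margin `α`; on `(0, γi]` it interpolates linearly to
`0`; on `(γi, cγ]` it is `0`. -/
def phiSpec (d k : ℕ) (cγ γi : ℝ) (φ : ℝ → ℝ) : Prop :=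
  (∀ (w x : Fin (d+1) → ℝ) (y : ℝ), w ∈ Hset d → x ∈ Xset d cγ →
      (y = 1 ∨ y = -1) → y * dotp w x ≤ 0 →
      φ (y * dotp w x) =
        (roundMeasure k (d+1)
          {p | γi / 2 < y * ∑ r, hRound p.1 p.2 w r * ∑ s, p.1 r s * x s}).toReal) ∧
  (∀ α : ℝ, 0 < α → α ≤ γi → φ α = ((γi - α) / γi) * φ 0) ∧
  (∀ α : ℝ, γi < α → α ≤ cγ → φ α = 0)

/-- Specification of the function `ρ` from the paper, for margin parameter `γi`. -/
def rhoSpec (d k : ℕ) (cγ γi : ℝ) (ρ : ℝ → ℝ) : Prop :=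
  (∀ (w x : Fin (d+1) → ℝ) (y : ℝ), w ∈ Hset d → x ∈ Xset d cγ →
      (y = 1 ∨ y = -1) → γi < y * dotp w x →
      ρ (y * dotp w x) =
        (roundMeasure k (d+1)
          {p | y * ∑ r, hRound p.1 p.2 w r * ∑ s, p.1 r s * x s ≤ γi / 2}).toReal) ∧
  (∀ α : ℝ, 0 < α → α ≤ γi →
      ∀ (w x : Fin (d+1) → ℝ) (y : ℝ), w ∈ Hset d → x ∈ Xset d cγ →
      (y = 1 ∨ y = -1) → y * dotp w x = γi →
      ρ α = (α / γi) *
        (roundMeasure k (d+1)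
          {p | y * ∑ r, hRound p.1 p.2 w r * ∑ s, p.1 r s * x s ≤ γi / 2}).toReal) ∧
  (∀ α : ℝ, -cγ ≤ α → α ≤ 0 → ρ α = 0)

open scoped RealInnerProductSpace

section gauss
variable {d : ℕ}

theorem stdGaussian_eq_withDensity :
    stdGaussian (EuclideanSpace ℝ (Fin d)) =
      volume.withDensity fun v => ENNReal.ofReal
        (((2 * Real.pi) ^ (d / 2 : ℝ))⁻¹ * Real.exp (-(1 / 2) * ‖v‖ ^ 2)) := by
  set Z : ℝ := (2 * Real.pi) ^ (d / 2 : ℝ) with hZ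
  have hZpos : 0 < Z := by positivity
  have hint : Integrable fun v : EuclideanSpace ℝ (Fin d) => Real.exp (-(1 / 2) * ‖v‖ ^ 2) := by
    have h := (GaussianFourier.integrable_cexp_neg_mul_sq_norm_add (b := (1 / 2 : ℂ))
      (by norm_num) 0 (0 : EuclideanSpace ℝ (Fin d))).norm
    refine h.congr (Filter.Eventually.of_forall fun v => ?_)
    simp only [Complex.norm_exp]
    congr 1
    simp [← Complex.ofReal_pow]
  have hmeas : Measurable fun v : EuclideanSpace ℝ (Fin d) =>
      ENNReal.ofReal (Z⁻¹ * Real.exp (-(1 / 2) * ‖v‖ ^ 2)) := by fun_prop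
  have hfin : IsFiniteMeasure (volume.withDensity fun v : EuclideanSpace ℝ (Fin d) =>
      ENNReal.ofReal (Z⁻¹ * Real.exp (-(1 / 2) * ‖v‖ ^ 2))) :=
    isFiniteMeasure_withDensity_ofReal (hint.const_mul _).2
  refine Measure.ext_of_charFun (funext fun t => ?_)
  rw [charFun_stdGaussian, charFun_apply,
    integral_withDensity_eq_integral_toReal_smul hmeas (by simp)]
  have h := GaussianFourier.integral_cexp_neg_mul_sq_norm_add (b := (1 / 2 : ℂ))
      (by norm_num) Complex.I t
  have h2 : (fun v : EuclideanSpace ℝ (Fin d) =>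
      (ENNReal.ofReal (Z⁻¹ * Real.exp (-(1 / 2) * ‖v‖ ^ 2))).toReal •
        Complex.exp (⟪v, t⟫ * Complex.I)) =
      fun v => (Z⁻¹ : ℂ) * Complex.exp (-(1 / 2 : ℂ) * ‖v‖ ^ 2 + Complex.I * ⟪t, v⟫) := by
    funext v
    rw [ENNReal.toReal_ofReal (by positivity), Complex.exp_add, real_inner_comm t v,
      mul_comm Complex.I]
    simp [mul_assoc]
  rw [h2, integral_const_mul, h]
  have h3 : (Real.pi / (1 / 2 : ℂ)) ^ (Module.finrank ℝ (EuclideanSpace ℝ (Fin d)) / 2 : ℂ) =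
      Z := by
    rw [hZ, Complex.ofReal_cpow (by positivity)]
    congr 1
    · push_cast; ring
    · simp
  rw [h3, ← mul_assoc, inv_mul_cancel₀ (by exact_mod_cast hZpos.ne'), one_mul]
  congr 1
  rw [Complex.I_sq]; ring

theorem integral_stdGaussian_shift (F : EuclideanSpace ℝ (Fin d) → ℝ)
    (a : EuclideanSpace ℝ (Fin d)) :
    ∫ g, F (g + a) * Real.exp (-⟪a, g⟫ - ‖a‖ ^ 2 / 2) ∂stdGaussian (EuclideanSpace ℝ (Fin d)) =
      ∫ g, F g ∂stdGaussian (EuclideanSpace ℝ (Fin d)) := by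
  have hmeas : Measurable fun v : EuclideanSpace ℝ (Fin d) =>
      ENNReal.ofReal (((2 * Real.pi) ^ (d / 2 : ℝ))⁻¹ * Real.exp (-(1 / 2) * ‖v‖ ^ 2)) := by
    fun_prop
  rw [stdGaussian_eq_withDensity, integral_withDensity_eq_integral_toReal_smul hmeas (by simp),
    integral_withDensity_eq_integral_toReal_smul hmeas (by simp)]
  rw [← integral_add_right_eq_self (fun v : EuclideanSpace ℝ (Fin d) => (ENNReal.ofReal
    (((2 * Real.pi) ^ (d / 2 : ℝ))⁻¹ * Real.exp (-(1 / 2) * ‖v‖ ^ 2))).toReal • F v) a]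
  congr 1
  funext v
  rw [ENNReal.toReal_ofReal (by positivity), ENNReal.toReal_ofReal (by positivity)]
  simp only [smul_eq_mul]
  have : Real.exp (-(1 / 2) * ‖v + a‖ ^ 2) =
      Real.exp (-(1 / 2) * ‖v‖ ^ 2) * Real.exp (-⟪a, v⟫ - ‖a‖ ^ 2 / 2) := by
    rw [← Real.exp_add, norm_add_sq_real, real_inner_comm v a]
    congr 1; ring
  rw [this]; ring

theorem map_inner_stdGaussian (x : EuclideanSpace ℝ (Fin d)) :
    (stdGaussian (EuclideanSpace ℝ (Fin d))).map (fun g => ⟪g, x⟫) =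
      (gaussianReal 0 1).map (fun r => ‖x‖ * r) := by
  have := Measure.isProbabilityMeasure_map (μ := stdGaussian (EuclideanSpace ℝ (Fin d)))
    (f := fun g => ⟪g, x⟫) (by fun_prop)
  rw [gaussianReal_map_const_mul]
  refine Measure.ext_of_charFun (funext fun t => ?_)
  rw [charFun_gaussianReal, charFun_apply_real, integral_map (by fun_prop) (by fun_prop)]
  have h := charFun_stdGaussian (E := EuclideanSpace ℝ (Fin d)) (t • x)
  rw [charFun_apply] at h
  simp only [inner_smul_right] at h
  push_cast at h
  rw [h]
  congr 1
  have : ‖t • x‖ ^ 2 = t ^ 2 * ‖x‖ ^ 2 := by rw [norm_smul, mul_pow, Real.norm_eq_abs, sq_abs]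
  rw [← Complex.ofReal_pow, this]
  simp
  ring

theorem integral_inner_stdGaussian (x : EuclideanSpace ℝ (Fin d)) (F : ℝ → ℝ)
    (hF : Measurable F) :
    ∫ g, F ⟪g, x⟫ ∂stdGaussian (EuclideanSpace ℝ (Fin d)) =
      ∫ r, F (‖x‖ * r) ∂gaussianReal 0 1 := by
  rw [← integral_map (φ := fun g => ⟪g, x⟫) (by fun_prop) hF.aestronglyMeasurable,
    map_inner_stdGaussian, integral_map (by fun_prop) hF.aestronglyMeasurable]

theorem integrable_inner_stdGaussian (x : EuclideanSpace ℝ (Fin d)) :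
    Integrable (fun g => ⟪g, x⟫) (stdGaussian (EuclideanSpace ℝ (Fin d))) := by
  have h1 : Integrable (fun r : ℝ => r)
      ((stdGaussian (EuclideanSpace ℝ (Fin d))).map (fun g => ⟪g, x⟫)) := by
    rw [map_inner_stdGaussian, gaussianReal_map_const_mul]
    exact (memLp_id_gaussianReal 1).integrable le_rfl
  exact h1.comp_measurable (by fun_prop)

/-- Gibbs variational inequality for a shifted and scaled Gaussian. -/
theorem exp_integral_shift_le (H : EuclideanSpace ℝ (Fin d) → ℝ) (hH : Measurable H) (M : ℝ)
    (hM : ∀ v, |H v| ≤ M) (w : EuclideanSpace ℝ (Fin d)) (s : ℝ) (hs : 0 < s) :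
    Real.exp (∫ g, H (w + s • g) ∂stdGaussian (EuclideanSpace ℝ (Fin d)) - ‖w‖ ^ 2 / (2 * s ^ 2)) ≤
      ∫ g, Real.exp (H (s • g)) ∂stdGaussian (EuclideanSpace ℝ (Fin d)) := by
  set G := stdGaussian (EuclideanSpace ℝ (Fin d))
  set a : EuclideanSpace ℝ (Fin d) := s⁻¹ • w with ha
  have hsa : ∀ g, s • (g + a) = w + s • g := fun g => by
    rw [ha, smul_add, smul_inv_smul₀ hs.ne', add_comm]
  have hna : ‖a‖ ^ 2 / 2 = ‖w‖ ^ 2 / (2 * s ^ 2) := by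
    rw [ha, norm_smul, mul_pow, norm_inv, Real.norm_of_nonneg hs.le, inv_pow]
    field_simp
  have hHint : Integrable (fun g => H (w + s • g)) G :=
    Integrable.of_bound (hH.comp (by fun_prop)).aestronglyMeasurable M
      (Filter.Eventually.of_forall fun g => hM _)
  have haint : Integrable (fun g => ⟪a, g⟫) G := by
    simpa only [real_inner_comm] using integrable_inner_stdGaussian a
  have ha0 : ∫ g, ⟪a, g⟫ ∂G = 0 := by
    have := integral_inner_stdGaussian a id measurable_id
    simp only [id] at this
    rw [integral_const_mul, integral_id_gaussianReal, mul_zero] at this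
    simpa only [real_inner_comm] using this
  have hshift := integral_stdGaussian_shift (fun g => Real.exp (H (s • g))) a
  simp only [hsa, ← Real.exp_add] at hshift
  rw [← hshift]
  have hbd : Integrable (fun g => Real.exp (H (w + s • g) + (-⟪a, g⟫ - ‖a‖ ^ 2 / 2))) G := by
    have h1 : Integrable (fun g => Real.exp ⟪g, -a⟫) G := by
      have h1 : Integrable (fun r : ℝ => Real.exp (1 * r))
          (G.map (fun g => ⟪g, -a⟫)) := by
        rw [map_inner_stdGaussian, gaussianReal_map_const_mul]
        exact integrable_exp_mul_gaussianReal 1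
      simpa [Function.comp_def] using h1.comp_measurable (by fun_prop)
    refine (h1.const_mul (Real.exp M)).mono' (by
      have : Measurable fun g => H (w + s • g) := hH.comp (by fun_prop)
      fun_prop) (Filter.Eventually.of_forall fun g => ?_)
    rw [Real.norm_of_nonneg (Real.exp_pos _).le, ← Real.exp_add, inner_neg_right, real_inner_comm]
    refine Real.exp_le_exp.2 ?_
    have := (abs_le.1 (hM (w + s • g))).2
    have := sq_nonneg ‖a‖
    linarith
  have hint2 : Integrable (fun g => H (w + s • g) + (-⟪a, g⟫ - ‖a‖ ^ 2 / 2)) G :=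
    hHint.add (haint.neg.sub (integrable_const _))
  have hj := convexOn_exp.map_integral_le (μ := G) Real.continuous_exp.continuousOn isClosed_univ
    (Filter.Eventually.of_forall fun _ => Set.mem_univ _) hint2 hbd
  refine le_trans (le_of_eq ?_) hj
  congr 1
  have h2 : ∫ g, (-⟪a, g⟫ - ‖a‖ ^ 2 / 2) ∂G = -(‖w‖ ^ 2 / (2 * s ^ 2)) := by
    rw [integral_sub (by exact haint.neg) (integrable_const _), integral_neg, ha0, hna]
    simp
  rw [integral_add hHint (by exact haint.neg.sub (integrable_const _)), h2]
  ring
end gauss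

section pac
variable {d : ℕ} {X : Type*} [MeasurableSpace X]

theorem lintegral_prod_exp_le_one (μ : Measure X) [IsProbabilityMeasure μ] (n : ℕ) (f : X → ℝ)
    (hf : Measurable f) (M : ℝ) (hM : ∀ x, |f x| ≤ M) (hexp : ∫ x, Real.exp (f x) ∂μ ≤ 1) :
    ∫⁻ S : Fin n → X, ENNReal.ofReal (Real.exp (∑ k, f (S k))) ∂(Measure.pi fun _ => μ) ≤ 1 := by
  have hsum : ∀ S : Fin n → X, |∑ k, f (S k)| ≤ n * M := fun S =>
    (Finset.abs_sum_le_sum_abs _ _).trans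
      ((Finset.sum_le_sum fun k _ => hM (S k)).trans (by simp))
  have hfm : Measurable fun S : Fin n → X => Real.exp (∑ k, f (S k)) :=
    Real.measurable_exp.comp
      (Finset.measurable_sum _ fun k _ => hf.comp (measurable_pi_apply k))
  rw [← ofReal_integral_eq_lintegral_ofReal
    (Integrable.of_bound hfm.aestronglyMeasurable (Real.exp (n * M))
      (Filter.Eventually.of_forall fun S => ?_))
    (Filter.Eventually.of_forall fun S => (Real.exp_pos _).le)]
  · simp_rw [Real.exp_sum]
    rw [integral_fintype_prod_eq_pow (fun x => Real.exp (f x)), ← ENNReal.ofReal_one]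
    exact ENNReal.ofReal_le_ofReal
      (pow_le_one₀ (integral_nonneg fun x => (Real.exp_pos _).le) hexp)
  · rw [Real.norm_of_nonneg (Real.exp_pos _).le]
    exact Real.exp_le_exp.2 (abs_le.1 (hsum S)).2

/-- PAC-Bayes tail bound with Gaussian prior `N(0, s² I)` and posteriors `N(w, s² I)`, `‖w‖ = 1`. -/
theorem pac_bayes (μ : Measure X) [IsProbabilityMeasure μ] (n : ℕ)
    (h : EuclideanSpace ℝ (Fin d) → X → ℝ) (hm : Measurable fun q : _ × X => h q.1 q.2)
    (M : ℝ) (hM : ∀ v x, |h v x| ≤ M) (hexp : ∀ v, ∫ x, Real.exp (h v x) ∂μ ≤ 1)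
    (s : ℝ) (hs : 0 < s) (B : ℝ) :
    (Measure.pi fun _ : Fin n => μ) {S | ∃ w : EuclideanSpace ℝ (Fin d), ‖w‖ = 1 ∧
      1 / (2 * s ^ 2) + B <
        ∫ g, ∑ k, h (w + s • g) (S k) ∂stdGaussian (EuclideanSpace ℝ (Fin d))} ≤
      ENNReal.ofReal (Real.exp (-B)) := by
  set G := stdGaussian (EuclideanSpace ℝ (Fin d))
  set Z : (Fin n → X) → ENNReal := fun S =>
    ∫⁻ g, ENNReal.ofReal (Real.exp (∑ k, h (s • g) (S k))) ∂G with hZ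
  have hjm : Measurable fun q : (Fin n → X) × EuclideanSpace ℝ (Fin d) =>
      ENNReal.ofReal (Real.exp (∑ k, h (s • q.2) (q.1 k))) := by
    refine ENNReal.measurable_ofReal.comp (Real.measurable_exp.comp
      (Finset.measurable_sum _ fun k _ => ?_))
    exact hm.comp (f := fun q : (Fin n → X) × EuclideanSpace ℝ (Fin d) => (s • q.2, q.1 k))
      (by fun_prop)
  have hZm : Measurable Z := hjm.lintegral_prod_right'
  have hZ1 : ∫⁻ S, Z S ∂(Measure.pi fun _ : Fin n => μ) ≤ 1 := by
    rw [hZ, lintegral_lintegral_swap hjm.aemeasurable]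
    calc _ ≤ ∫⁻ _, 1 ∂G := lintegral_mono fun g =>
            lintegral_prod_exp_le_one μ n (h (s • g)) (hm.comp measurable_prodMk_left) M (hM _)
              (hexp _)
      _ = 1 := by simp
  have hsub : {S | ∃ w : EuclideanSpace ℝ (Fin d), ‖w‖ = 1 ∧
      1 / (2 * s ^ 2) + B < ∫ g, ∑ k, h (w + s • g) (S k) ∂G} ⊆
      {S | ENNReal.ofReal (Real.exp B) ≤ Z S} := by
    rintro S ⟨w, hw, hlt⟩
    have hHm : Measurable fun v => ∑ k, h v (S k) :=
      Finset.measurable_sum _ fun k _ => hm.comp measurable_prodMk_right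
    have hHb : ∀ v, |∑ k, h v (S k)| ≤ n * M := fun v =>
      (Finset.abs_sum_le_sum_abs _ _).trans
        ((Finset.sum_le_sum fun k _ => hM v (S k)).trans (by simp))
    have hkey := exp_integral_shift_le _ hHm _ hHb w s hs
    rw [hw, one_pow] at hkey
    have hint : Integrable (fun g => Real.exp (∑ k, h (s • g) (S k))) G := by
      refine Integrable.of_bound
        (Real.measurable_exp.comp (hHm.comp (by fun_prop))).aestronglyMeasurable
        (Real.exp (n * M)) (Filter.Eventually.of_forall fun g => ?_)
      rw [Real.norm_of_nonneg (Real.exp_pos _).le]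
      exact Real.exp_le_exp.2 (abs_le.1 (hHb _)).2
    change ENNReal.ofReal (Real.exp B) ≤ ∫⁻ g, ENNReal.ofReal (Real.exp (∑ k, h (s • g) (S k))) ∂G
    rw [← ofReal_integral_eq_lintegral_ofReal hint
      (Filter.Eventually.of_forall fun _ => (Real.exp_pos _).le)]
    exact ENNReal.ofReal_le_ofReal ((Real.exp_le_exp.2 (by linarith)).trans hkey)
  refine (measure_mono hsub).trans ?_
  have hmk := (mul_meas_ge_le_lintegral (μ := Measure.pi fun _ : Fin n => μ) hZm
    (ENNReal.ofReal (Real.exp B))).trans hZ1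
  rw [Real.exp_neg, ENNReal.ofReal_inv_of_pos (Real.exp_pos _)]
  rw [mul_comm] at hmk
  simpa using (ENNReal.le_div_iff_mul_le (Or.inl (by simp [Real.exp_pos])) (Or.inl (by simp))).2 hmk

theorem exp_neg_sub_sq_le {u : ℝ} (hu : |u| ≤ 1 / 2) : Real.exp (-u - u ^ 2) ≤ 1 - u := by
  obtain ⟨h1, h2⟩ := abs_le.1 hu
  have h3 : Real.exp (u + u ^ 2) ≥ 1 + (u + u ^ 2) + (u + u ^ 2) ^ 2 / 2 ∨
      u + u ^ 2 < 0 := by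
    rcases lt_or_ge (u + u ^ 2) 0 with h | h
    · exact Or.inr h
    · exact Or.inl (Real.quadratic_le_exp_of_nonneg h)
  have h4 : 1 ≤ (1 - u) * Real.exp (u + u ^ 2) := by
    rcases h3 with h | h
    · refine le_trans ?_ (mul_le_mul_of_nonneg_left h (by linarith : (0 : ℝ) ≤ 1 - u))
      rcases le_or_gt 0 u with h5 | h5
      · nlinarith [mul_nonneg h5 h5, mul_nonneg (mul_nonneg h5 h5) h5]
      · nlinarith [mul_pos_of_neg_of_neg h5 h5]
    · have hu0 : u < 0 := by nlinarith
      have := Real.add_one_le_exp (u + u ^ 2)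
      nlinarith [mul_pos_of_neg_of_neg hu0 hu0]
  have h5 : Real.exp (-u - u ^ 2) * Real.exp (u + u ^ 2) = 1 := by
    rw [← Real.exp_add]; simp
  have := Real.exp_pos (u + u ^ 2)
  nlinarith

/-- Self-normalized exponential inequality with the empirical second moment. -/
theorem integral_exp_selfNormalized_le_one (μ : Measure X) [IsProbabilityMeasure μ] (f : X → ℝ)
    (hf : Measurable f) (l : ℝ) (hl : ∀ x, |l * f x| ≤ 1 / 2) :
    ∫ x, Real.exp (l * ∫ y, f y ∂μ - l * f x - l ^ 2 * f x ^ 2) ∂μ ≤ 1 := by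
  have hint : Integrable (fun x => l * f x) μ :=
    Integrable.of_bound (by fun_prop) (1 / 2) (Filter.Eventually.of_forall hl)
  have h1 : ∀ x, Real.exp (l * ∫ y, f y ∂μ - l * f x - l ^ 2 * f x ^ 2) =
      Real.exp (l * ∫ y, f y ∂μ) * Real.exp (-(l * f x) - (l * f x) ^ 2) := fun x => by
    rw [← Real.exp_add]; congr 1; ring
  have h0 : Integrable (fun x => Real.exp (-(l * f x) - (l * f x) ^ 2)) μ := by
    refine Integrable.of_bound (by fun_prop) (1 + 1 / 2) (Filter.Eventually.of_forall fun x => ?_)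
    rw [Real.norm_of_nonneg (Real.exp_pos _).le]
    have := (abs_le.1 (hl x)).1
    linarith [exp_neg_sub_sq_le (hl x)]
  have h2 : ∫ x, Real.exp (-(l * f x) - (l * f x) ^ 2) ∂μ ≤ 1 - l * ∫ x, f x ∂μ := by
    calc _ ≤ ∫ x, (1 - l * f x) ∂μ :=
          integral_mono h0 ((integrable_const _).sub hint) fun x => exp_neg_sub_sq_le (hl x)
      _ = _ := by rw [integral_sub (integrable_const _) hint, integral_const_mul]; simp
  simp_rw [h1]
  rw [integral_const_mul]
  have h3 := Real.add_one_le_exp (-(l * ∫ x, f x ∂μ))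
  calc _ ≤ Real.exp (l * ∫ x, f x ∂μ) * Real.exp (-(l * ∫ x, f x ∂μ)) :=
        mul_le_mul_of_nonneg_left (by linarith) (Real.exp_pos _).le
    _ = 1 := by rw [← Real.exp_add]; simp

end pac

section smoothing

/-- Cubic smooth step: equal to `1` on `(-∞, 1/3]` and to `0` on `[2/3, ∞)`. -/
def softStep (z : ℝ) : ℝ :=
  1 - 3 * max 0 (min 1 (3 * z - 1)) ^ 2 + 2 * max 0 (min 1 (3 * z - 1)) ^ 3

/-- Derivative of `softStep`. -/
def softStepDeriv (z : ℝ) : ℝ :=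
  -18 * (max 0 (min 1 (3 * z - 1)) * (1 - max 0 (min 1 (3 * z - 1))))

theorem softStep_mem (z : ℝ) : 0 ≤ softStep z ∧ softStep z ≤ 1 := by
  have h0 : 0 ≤ max 0 (min 1 (3 * z - 1)) := le_max_left _ _
  have h1 : max 0 (min 1 (3 * z - 1)) ≤ 1 := max_le zero_le_one (min_le_left _ _)
  unfold softStep
  generalize max 0 (min 1 (3 * z - 1)) = s at h0 h1
  constructor
  · nlinarith [mul_nonneg (sq_nonneg (1 - s)) h0, sq_nonneg (1 - s)]
  · nlinarith [mul_nonneg (sq_nonneg s) (sub_nonneg.2 h1), sq_nonneg s]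

theorem abs_softStep_le_one (z : ℝ) : |softStep z| ≤ 1 :=
  abs_le.2 ⟨by linarith [(softStep_mem z).1], (softStep_mem z).2⟩

theorem continuous_softStep : Continuous softStep := by unfold softStep; fun_prop

theorem softStep_of_le {z : ℝ} (hz : z ≤ 1 / 3) : softStep z = 1 := by
  have : max 0 (min 1 (3 * z - 1)) = 0 :=
    max_eq_left ((min_le_right _ _).trans (by linarith))
  simp [softStep, this]

theorem softStep_of_ge {z : ℝ} (hz : 2 / 3 ≤ z) : softStep z = 0 := by
  have : max 0 (min 1 (3 * z - 1)) = 1 := by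
    rw [min_eq_left (by linarith)]; simp
  simp [softStep, this]; norm_num

theorem abs_softStep_taylor (z h : ℝ) :
    |softStep (z + h) - softStep z - softStepDeriv z * h| ≤ 81 * h ^ 2 := by
  have key : ∀ a k : ℝ, |(1 - 3 * max 0 (min 1 (a + k)) ^ 2 + 2 * max 0 (min 1 (a + k)) ^ 3) -
      (1 - 3 * max 0 (min 1 a) ^ 2 + 2 * max 0 (min 1 a) ^ 3) -
      -6 * (max 0 (min 1 a) * (1 - max 0 (min 1 a))) * k| ≤ 9 * k ^ 2 := by
    intro a k
    have h0 : 0 ≤ max 0 (min 1 a) := le_max_left _ _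
    have h1 : max 0 (min 1 a) ≤ 1 := max_le zero_le_one (min_le_left _ _)
    have h0' : 0 ≤ max 0 (min 1 (a + k)) := le_max_left _ _
    have h1' : max 0 (min 1 (a + k)) ≤ 1 := max_le zero_le_one (min_le_left _ _)
    have hlip : |max 0 (min 1 (a + k)) - max 0 (min 1 a)| ≤ |k| := by
      have h := abs_min_sub_min_le_max 1 (a + k) 1 a
      have h' := abs_max_sub_max_le_max 0 (min 1 (a + k)) 0 (min 1 a)
      simp only [sub_self, abs_zero, add_sub_cancel_left] at h h'
      exact h'.trans (max_le (abs_nonneg _) (h.trans (by simp)))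
    have hover : |max 0 (min 1 a) * (1 - max 0 (min 1 a)) *
        (max 0 (min 1 (a + k)) - max 0 (min 1 a) - k)| ≤ k ^ 2 := by
      rcases le_or_gt a 0 with ha | ha
      · rw [max_eq_left ((min_le_right 1 a).trans ha)]; simp; positivity
      rcases le_or_gt 1 a with ha' | ha'
      · rw [min_eq_left ha']; simp; positivity
      rw [min_eq_right ha'.le, max_eq_right ha.le]
      rcases le_or_gt (a + k) 0 with hk | hk
      · rw [max_eq_left ((min_le_right 1 (a + k)).trans hk)]
        have h2 : a * -(a + k) ≤ -k * -k := by gcongr <;> linarith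
        have h3 := mul_nonneg (mul_nonneg ha.le ha.le) (neg_nonneg.2 hk)
        have h4 := mul_nonneg (mul_nonneg ha.le (sub_nonneg.2 ha'.le)) (neg_nonneg.2 hk)
        rw [abs_le]; constructor <;> nlinarith
      rcases le_or_gt 1 (a + k) with hk' | hk'
      · rw [min_eq_left hk', max_eq_right zero_le_one]
        have h2 : (1 - a) * (a + k - 1) ≤ k * k := by gcongr <;> linarith
        have h3 := mul_nonneg (mul_nonneg (sub_nonneg.2 ha'.le) (sub_nonneg.2 ha'.le))
          (sub_nonneg.2 hk')
        have h4 := mul_nonneg (mul_nonneg ha.le (sub_nonneg.2 ha'.le)) (sub_nonneg.2 hk')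
        rw [abs_le]; constructor <;> nlinarith
      rw [min_eq_right hk'.le, max_eq_right hk.le]
      simp; positivity
    generalize max 0 (min 1 (a + k)) = s' at *
    generalize max 0 (min 1 a) = s at *
    have hsq : (s' - s) ^ 2 ≤ k ^ 2 := sq_le_sq.2 hlip
    have hid : (1 - 3 * s' ^ 2 + 2 * s' ^ 3) - (1 - 3 * s ^ 2 + 2 * s ^ 3) -
        -6 * (s * (1 - s)) * k =
        (s' - s) ^ 2 * (2 * s' + 4 * s - 3) + -6 * (s * (1 - s) * (s' - s - k)) := by ring
    rw [hid]
    have h2 : |(s' - s) ^ 2 * (2 * s' + 4 * s - 3)| ≤ k ^ 2 * 3 := by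
      rw [abs_mul, abs_of_nonneg (sq_nonneg _)]
      exact mul_le_mul hsq (abs_le.2 ⟨by linarith, by linarith⟩) (abs_nonneg _) (sq_nonneg _)
    refine (abs_add_le _ _).trans ?_
    rw [abs_mul (-6), show |(-6 : ℝ)| = 6 by norm_num]
    linarith
  have := key (3 * z - 1) (3 * h)
  unfold softStep softStepDeriv
  rw [show 3 * (z + h) - 1 = 3 * z - 1 + 3 * h by ring]
  convert this using 1
  · congr 1; ring
  · ring

/-- Gaussian smoothing of `softStep` with standard deviation `c`. -/
def smoothStep (c a : ℝ) : ℝ := ∫ r, softStep (a + c * r) ∂gaussianReal 0 1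

theorem integrable_softStep_comp {Ω : Type*} [MeasurableSpace Ω] (P : Measure Ω)
    [IsFiniteMeasure P] (f : Ω → ℝ) (hf : Measurable f) : Integrable (fun x => softStep (f x)) P :=
  Integrable.of_bound (continuous_softStep.measurable.comp hf).aestronglyMeasurable 1
    (Filter.Eventually.of_forall fun _ => abs_softStep_le_one _)

theorem smoothStep_nonneg (c a : ℝ) : 0 ≤ smoothStep c a :=
  integral_nonneg fun _ => (softStep_mem _).1

theorem smoothStep_le_one (c a : ℝ) : smoothStep c a ≤ 1 := by
  calc smoothStep c a ≤ ∫ _, (1 : ℝ) ∂gaussianReal 0 1 :=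
        integral_mono (integrable_softStep_comp _ _ (by fun_prop)) (integrable_const _)
          fun _ => (softStep_mem _).2
    _ = 1 := by simp

theorem measurable_smoothStep : Measurable fun q : ℝ × ℝ => smoothStep q.1 q.2 := by
  have h : StronglyMeasurable fun q : (ℝ × ℝ) × ℝ => softStep (q.1.2 + q.1.1 * q.2) :=
    (continuous_softStep.comp (by fun_prop)).stronglyMeasurable
  exact h.integral_prod_right'.measurable

theorem abs_softStep_sub_smoothStep_le (c a : ℝ) :
    |softStep a - smoothStep c a| ≤ 81 * c ^ 2 := by
  have hi : Integrable (fun r : ℝ => r) (gaussianReal 0 1) :=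
    (memLp_id_gaussianReal 1).integrable le_rfl
  have hi2 : Integrable (fun r : ℝ => r ^ 2) (gaussianReal 0 1) :=
    (memLp_id_gaussianReal 2).integrable_sq
  have hv : ∫ r, r ^ 2 ∂gaussianReal 0 1 = 1 := by
    have h := variance_fun_id_gaussianReal (μ := 0) (v := 1)
    rw [variance_of_integral_eq_zero (by fun_prop) (by simp [integral_id_gaussianReal])] at h
    simpa using h
  have hs := integrable_softStep_comp (gaussianReal 0 1) (fun r => a + c * r) (by fun_prop)
  have h1 : ∫ r, (softStep (a + c * r) - softStep a - softStepDeriv a * (c * r)) ∂gaussianReal 0 1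
      = smoothStep c a - softStep a := by
    rw [integral_sub (by exact hs.sub (integrable_const _)) ((hi.const_mul _).const_mul _),
      integral_sub hs (integrable_const _), integral_const_mul, integral_const_mul,
      integral_id_gaussianReal]
    simp [smoothStep]
  rw [abs_sub_comm, ← h1]
  calc _ ≤ ∫ r, |softStep (a + c * r) - softStep a - softStepDeriv a * (c * r)| ∂gaussianReal 0 1 :=
        abs_integral_le_integral_abs
    _ ≤ ∫ r, 81 * c ^ 2 * r ^ 2 ∂gaussianReal 0 1 := by
        refine integral_mono (((hs.sub (integrable_const _)).sub
          ((hi.const_mul _).const_mul _)).abs) (hi2.const_mul _) fun r => ?_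
        have := abs_softStep_taylor a (c * r)
        dsimp only
        linarith [mul_pow c r 2]
    _ = 81 * c ^ 2 := by rw [integral_const_mul, hv, mul_one]

theorem integral_smoothStep (b c a : ℝ) :
    ∫ r, smoothStep b (a + c * r) ∂gaussianReal 0 1 = smoothStep (√(c ^ 2 + b ^ 2)) a := by
  have hlaw : ∀ e : ℝ, (gaussianReal 0 1).map (fun r => e * r) =
      gaussianReal 0 (.mk (e ^ 2) (sq_nonneg e)) := fun e => by
    rw [gaussianReal_map_const_mul]; simp
  have hconv : ((gaussianReal 0 1).map (fun r => c * r)) ∗ ((gaussianReal 0 1).map (fun r => b * r))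
      = (gaussianReal 0 1).map (fun r => √(c ^ 2 + b ^ 2) * r) := by
    rw [hlaw, hlaw, hlaw, gaussianReal_conv_gaussianReal]
    congr 1
    · simp
    · ext; simp [Real.sq_sqrt (by positivity : 0 ≤ c ^ 2 + b ^ 2)]
  have hm : Continuous fun x => softStep (a + x) := continuous_softStep.comp (by fun_prop)
  have h1 : smoothStep (√(c ^ 2 + b ^ 2)) a =
      ∫ x, softStep (a + x) ∂((gaussianReal 0 1).map (fun r => √(c ^ 2 + b ^ 2) * r)) := by
    rw [integral_map (by fun_prop) hm.aestronglyMeasurable, smoothStep]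
  have i1 := Measure.isProbabilityMeasure_map (μ := gaussianReal 0 1)
    (f := fun r => c * r) (by fun_prop)
  have i2 := Measure.isProbabilityMeasure_map (μ := gaussianReal 0 1)
    (f := fun r => b * r) (by fun_prop)
  rw [h1, ← hconv, integral_conv (integrable_softStep_comp _ _ (by fun_prop)),
    integral_map (by fun_prop)]
  · congr 1
    funext r
    have hr : Continuous fun y => softStep (a + (c * r + y)) :=
      continuous_softStep.comp (by fun_prop)
    rw [integral_map (by fun_prop) hr.aestronglyMeasurable]
    simp only [smoothStep, add_assoc]
  · have h : StronglyMeasurable fun q : ℝ × ℝ => softStep (a + (q.1 + q.2)) :=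
      (continuous_softStep.comp (by fun_prop)).stronglyMeasurable
    exact h.integral_prod_right'.aestronglyMeasurable

theorem integral_exp_gaussianReal (t : ℝ) :
    ∫ r, Real.exp (t * r) ∂gaussianReal 0 1 = Real.exp (t ^ 2 / 2) := by
  have := congrFun (mgf_id_gaussianReal (μ := 0) (v := 1)) t
  simpa [mgf] using this

theorem exp_chernoff_le {c σ : ℝ} (hσ : 0 < σ) (hc : c ^ 2 ≤ σ ^ 2) (θ : ℝ)
    (hθ : θ ≤ -(1 / 3)) :
    Real.exp ((1 / (3 * σ ^ 2)) * θ) * Real.exp ((c * (1 / (3 * σ ^ 2))) ^ 2 / 2) ≤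
      Real.exp (-(1 / (18 * σ ^ 2))) := by
  rw [← Real.exp_add]
  refine Real.exp_le_exp.2 ?_
  have h1 : (1 / (3 * σ ^ 2)) * θ ≤ (1 / (3 * σ ^ 2)) * (-(1 / 3)) :=
    mul_le_mul_of_nonneg_left hθ (by positivity)
  have h2 : (c * (1 / (3 * σ ^ 2))) ^ 2 / 2 ≤ σ ^ 2 * (1 / (3 * σ ^ 2)) ^ 2 / 2 := by
    rw [mul_pow]
    gcongr
  have h3 : (1 / (3 * σ ^ 2)) * (-(1 / 3)) + σ ^ 2 * (1 / (3 * σ ^ 2)) ^ 2 / 2 =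
      -(1 / (18 * σ ^ 2)) := by field_simp; norm_num
  linarith

theorem smoothStep_le_of_one_le {c σ z : ℝ} (hσ : 0 < σ) (hc : c ^ 2 ≤ σ ^ 2) (hz : 1 ≤ z) :
    smoothStep c z ≤ Real.exp (-(1 / (18 * σ ^ 2))) := by
  set s := 1 / (3 * σ ^ 2) with hs
  have hs0 : 0 < s := by positivity
  have hb : ∀ r, softStep (z + c * r) ≤ Real.exp (s * (2 / 3 - z)) * Real.exp (-(c * s) * r) := by
    intro r
    rw [← Real.exp_add]
    rcases le_or_gt (2 / 3) (z + c * r) with h | h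
    · rw [softStep_of_ge h]; positivity
    · refine (softStep_mem _).2.trans (Real.one_le_exp ?_)
      nlinarith
  calc smoothStep c z ≤
      ∫ r, Real.exp (s * (2 / 3 - z)) * Real.exp (-(c * s) * r) ∂gaussianReal 0 1 :=
        integral_mono (integrable_softStep_comp _ _ (by fun_prop))
          ((integrable_exp_mul_gaussianReal _).const_mul _) hb
    _ = Real.exp (s * (2 / 3 - z)) * Real.exp ((c * s) ^ 2 / 2) := by
        rw [integral_const_mul, integral_exp_gaussianReal, neg_sq]
    _ ≤ _ := exp_chernoff_le hσ hc _ (by linarith)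

theorem one_sub_smoothStep_le_of_nonpos {c σ z : ℝ} (hσ : 0 < σ) (hc : c ^ 2 ≤ σ ^ 2)
    (hz : z ≤ 0) : 1 - smoothStep c z ≤ Real.exp (-(1 / (18 * σ ^ 2))) := by
  set s := 1 / (3 * σ ^ 2) with hs
  have hs0 : 0 < s := by positivity
  have hb : ∀ r, 1 - softStep (z + c * r) ≤
      Real.exp (s * (z - 1 / 3)) * Real.exp ((c * s) * r) := by
    intro r
    rw [← Real.exp_add]
    rcases le_or_gt (z + c * r) (1 / 3) with h | h
    · rw [softStep_of_le h, sub_self]; positivity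
    · have := (softStep_mem (z + c * r)).1
      refine le_trans (by linarith) (Real.one_le_exp ?_)
      nlinarith
  have hi := integrable_softStep_comp (gaussianReal 0 1) (fun r => z + c * r) (by fun_prop)
  calc 1 - smoothStep c z = ∫ r, (1 - softStep (z + c * r)) ∂gaussianReal 0 1 := by
        rw [integral_sub (integrable_const _) hi]; simp [smoothStep]
    _ ≤ ∫ r, Real.exp (s * (z - 1 / 3)) * Real.exp ((c * s) * r) ∂gaussianReal 0 1 :=
        integral_mono ((integrable_const _).sub hi)
          ((integrable_exp_mul_gaussianReal _).const_mul _) hb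
    _ = Real.exp (s * (z - 1 / 3)) * Real.exp ((c * s) ^ 2 / 2) := by
        rw [integral_const_mul, integral_exp_gaussianReal]
    _ ≤ _ := exp_chernoff_le hσ hc _ (by linarith)

end smoothing

/-- Fraction of the sample with margin at most `γ`. -/
def empMargin {d n : ℕ} {X : Type*} (u : X → EuclideanSpace ℝ (Fin d)) (γ : ℝ)
    (w : EuclideanSpace ℝ (Fin d)) (S : Fin n → X) : ℝ :=
  (Nat.card {i : Fin n // ⟪w, u (S i)⟫ ≤ γ} : ℝ) / n

theorem sum_ite_margin {d n : ℕ} (hn : 1 ≤ n) {X : Type*} (u : X → EuclideanSpace ℝ (Fin d)) (γ : ℝ)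
    (w : EuclideanSpace ℝ (Fin d)) (S : Fin n → X) (c : ℝ) :
    ∑ k, (if ⟪w, u (S k)⟫ ≤ γ then c else 0) = n * (c * empMargin u γ w S) := by
  classical
  have hn' : (n : ℝ) ≠ 0 := by positivity
  rw [empMargin, Nat.card_eq_fintype_card, Fintype.card_subtype, ← Finset.sum_filter,
    Finset.sum_const, nsmul_eq_mul]
  field_simp

section chaining
variable {d : ℕ} {X : Type*} [MeasurableSpace X]

/-- Standard deviation at level `j` of the chain started at level `m`. -/
def levelStd (m j : ℕ) : ℝ := (√(288 * (((m : ℝ) + 1) * 4 ^ j)))⁻¹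

theorem levelStd_pos (m j : ℕ) : 0 < levelStd m j := by unfold levelStd; positivity

theorem levelStd_sq (m j : ℕ) : levelStd m j ^ 2 = (288 * (((m : ℝ) + 1) * 4 ^ j))⁻¹ := by
  rw [levelStd, inv_pow, Real.sq_sqrt (by positivity)]

theorem two_mul_levelStd_succ (m j : ℕ) : 2 * levelStd m (j + 1) = levelStd m j := by
  refine (pow_left_inj₀ (mul_pos two_pos (levelStd_pos m _)).le (levelStd_pos m j).le
    two_ne_zero).1 ?_
  rw [mul_pow, levelStd_sq, levelStd_sq, pow_succ]
  field_simp
  norm_num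
  ring

/-- Link of the chain: the step itself at level `0`, later the correction to the previous level. -/
def chainLink (j : ℕ) (c a : ℝ) : ℝ :=
  if j = 0 then softStep a else softStep a - smoothStep (√3 * c) a

/-- Gaussian average of `chainLink`. -/
def smoothLink (j : ℕ) (c a : ℝ) : ℝ :=
  if j = 0 then smoothStep c a else smoothStep c a - smoothStep (2 * c) a

theorem measurable_chainLink (j : ℕ) : Measurable fun q : ℝ × ℝ => chainLink j q.1 q.2 := by
  unfold chainLink
  have h1 : Measurable fun q : ℝ × ℝ => softStep q.2 :=
    continuous_softStep.measurable.comp measurable_snd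
  have h2 : Measurable fun q : ℝ × ℝ => smoothStep (√3 * q.1) q.2 :=
    measurable_smoothStep.comp (f := fun q : ℝ × ℝ => (√3 * q.1, q.2)) (by fun_prop)
  split_ifs
  · exact h1
  · exact h1.sub h2

theorem measurable_chainLink_right (j : ℕ) (c : ℝ) : Measurable (chainLink j c) :=
  (measurable_chainLink j).comp (f := fun t : ℝ => (c, t)) (by fun_prop)

theorem measurable_smoothLink (j : ℕ) : Measurable fun q : ℝ × ℝ => smoothLink j q.1 q.2 := by
  unfold smoothLink
  have h2 : Measurable fun q : ℝ × ℝ => smoothStep (2 * q.1) q.2 :=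
    measurable_smoothStep.comp (f := fun q : ℝ × ℝ => (2 * q.1, q.2)) (by fun_prop)
  split_ifs
  · exact measurable_smoothStep
  · exact measurable_smoothStep.sub h2

theorem abs_chainLink_le_one (j : ℕ) (c a : ℝ) : |chainLink j c a| ≤ 1 := by
  unfold chainLink
  have := softStep_mem a
  have := smoothStep_nonneg (√3 * c) a
  have := smoothStep_le_one (√3 * c) a
  split_ifs <;> rw [abs_le] <;> constructor <;> linarith

theorem abs_chainLink_le (m j : ℕ) {c : ℝ} (hc : c ^ 2 ≤ levelStd m j ^ 2) (a : ℝ) :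
    |chainLink j c a| ≤ ((4 : ℝ) ^ j)⁻¹ := by
  rcases Nat.eq_zero_or_pos j with rfl | hj
  · simpa using abs_chainLink_le_one 0 c a
  rw [chainLink, if_neg hj.ne']
  refine (abs_softStep_sub_smoothStep_le _ _).trans ?_
  rw [mul_pow, Real.sq_sqrt (by norm_num)]
  have h1 : levelStd m j ^ 2 ≤ (288 * (4 : ℝ) ^ j)⁻¹ := by
    rw [levelStd_sq]
    refine inv_anti₀ (by positivity) ?_
    have : (0 : ℝ) ≤ m * 4 ^ j := by positivity
    linarith
  rw [mul_inv] at h1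
  have h2 : (0 : ℝ) < ((4 : ℝ) ^ j)⁻¹ := by positivity
  linarith

theorem integral_chainLink (j : ℕ) {c : ℝ} (hc : 0 ≤ c) (z : ℝ) :
    ∫ r, chainLink j c (z + c * r) ∂gaussianReal 0 1 = smoothLink j c z := by
  unfold chainLink smoothLink
  split_ifs
  · rfl
  have hm : Measurable fun r => smoothStep (√3 * c) (z + c * r) :=
    measurable_smoothStep.comp (f := fun r : ℝ => (√3 * c, z + c * r)) (by fun_prop)
  have hi : Integrable (fun r => smoothStep (√3 * c) (z + c * r)) (gaussianReal 0 1) :=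
    Integrable.of_bound hm.aestronglyMeasurable 1 (Filter.Eventually.of_forall fun r => by
      rw [Real.norm_of_nonneg (smoothStep_nonneg _ _)]; exact smoothStep_le_one _ _)
  rw [integral_sub (integrable_softStep_comp _ _ (by fun_prop)) hi, integral_smoothStep]
  congr 2
  rw [mul_pow, Real.sq_sqrt (by norm_num), show c ^ 2 + 3 * c ^ 2 = (2 * c) ^ 2 by ring,
    Real.sqrt_sq (by linarith)]

theorem integral_chainLink_sq_le (m j : ℕ) {c : ℝ} (hc0 : 0 ≤ c)
    (hc : c ^ 2 ≤ levelStd m j ^ 2) (z : ℝ) :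
    ∫ r, chainLink j c (z + c * r) ^ 2 ∂gaussianReal 0 1 ≤
      (if z ≤ 1 then (16 ^ j : ℝ)⁻¹ else 0) + 2 * Real.exp (-(4 * (((m : ℝ) + 1) * 4 ^ j))) := by
  have hm : Measurable fun r => chainLink j c (z + c * r) :=
    (measurable_chainLink j).comp (f := fun r : ℝ => (c, z + c * r)) (by fun_prop)
  have hb : ∀ r, chainLink j c (z + c * r) ^ 2 ≤ (16 ^ j : ℝ)⁻¹ := fun r => by
    have h := pow_le_pow_left₀ (abs_nonneg _) (abs_chainLink_le m j hc (z + c * r)) 2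
    rw [sq_abs, inv_pow, ← pow_mul, mul_comm j, pow_mul] at h
    norm_num at h
    exact h
  have hi : Integrable (fun r => chainLink j c (z + c * r) ^ 2) (gaussianReal 0 1) :=
    Integrable.of_bound (hm.pow_const 2).aestronglyMeasurable _
      (Filter.Eventually.of_forall fun r => by
        rw [Real.norm_of_nonneg (sq_nonneg _)]; exact hb r)
  split_ifs with hz
  · calc _ ≤ ∫ _, (16 ^ j : ℝ)⁻¹ ∂gaussianReal 0 1 := integral_mono hi (integrable_const _) hb
      _ = (16 ^ j : ℝ)⁻¹ := by simp
      _ ≤ _ := le_add_of_nonneg_right (by positivity)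
  · have hσ := levelStd_pos m j
    have htail : ∀ e : ℝ, e ^ 2 ≤ (2 * levelStd m j) ^ 2 →
        smoothStep e z ≤ Real.exp (-(4 * (((m : ℝ) + 1) * 4 ^ j))) := fun e he => by
      refine (smoothStep_le_of_one_le (by positivity) he (not_le.1 hz).le).trans_eq ?_
      rw [mul_pow, levelStd_sq]
      congr 2
      field_simp
      norm_num
    have hm2 : Measurable fun r => smoothStep (√3 * c) (z + c * r) :=
      measurable_smoothStep.comp (f := fun r : ℝ => (√3 * c, z + c * r)) (by fun_prop)
    have hi2 : Integrable (fun r => smoothStep (√3 * c) (z + c * r)) (gaussianReal 0 1) :=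
      Integrable.of_bound hm2.aestronglyMeasurable 1 (Filter.Eventually.of_forall fun r => by
        rw [Real.norm_of_nonneg (smoothStep_nonneg _ _)]; exact smoothStep_le_one _ _)
    have hi1 := integrable_softStep_comp (gaussianReal 0 1) (fun r => z + c * r) (by fun_prop)
    have hpt : ∀ r, chainLink j c (z + c * r) ^ 2 ≤
        softStep (z + c * r) + smoothStep (√3 * c) (z + c * r) := fun r => by
      have h1 := softStep_mem (z + c * r)
      have h2 := smoothStep_nonneg (√3 * c) (z + c * r)
      have h3 := smoothStep_le_one (√3 * c) (z + c * r)
      unfold chainLink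
      split_ifs
      · nlinarith
      · nlinarith [mul_nonneg h1.1 h2]
    calc _ ≤ ∫ r, (softStep (z + c * r) + smoothStep (√3 * c) (z + c * r)) ∂gaussianReal 0 1 :=
          integral_mono hi (hi1.add hi2) hpt
      _ = smoothStep c z + smoothStep (2 * c) z := by
          rw [integral_add hi1 hi2, integral_smoothStep, mul_pow, Real.sq_sqrt (by norm_num),
            show c ^ 2 + 3 * c ^ 2 = (2 * c) ^ 2 by ring, Real.sqrt_sq (by linarith)]
          rfl
      _ ≤ _ := by
          have h1 := htail c (by rw [mul_pow]; nlinarith [sq_nonneg (levelStd m j)])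
          have h2 := htail (2 * c) (by rw [mul_pow, mul_pow]; linarith)
          linarith

theorem sum_smoothLink (m : ℕ) (b z : ℝ) (J : ℕ) :
    ∑ j ∈ Finset.range (J + 1), smoothLink j (levelStd m j * b) z =
      smoothStep (levelStd m J * b) z := by
  induction J with
  | zero => simp [smoothLink]
  | succ J ih =>
    rw [Finset.sum_range_succ, ih, smoothLink, if_neg (Nat.succ_ne_zero J), ← mul_assoc,
      two_mul_levelStd_succ]
    ring

theorem integral_gaussian_margin (w x : EuclideanSpace ℝ (Fin d)) {γ : ℝ} (hγ : γ ≠ 0) (σ : ℝ)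
    (F : ℝ → ℝ) (hF : Measurable F) :
    ∫ g, F (⟪w + (γ * σ) • g, x⟫ / γ) ∂stdGaussian (EuclideanSpace ℝ (Fin d)) =
      ∫ r, F (⟪w, x⟫ / γ + σ * ‖x‖ * r) ∂gaussianReal 0 1 := by
  have h1 := integral_inner_stdGaussian x (fun t => F (⟪w, x⟫ / γ + σ * t)) (by fun_prop)
  simp only [← mul_assoc] at h1
  rw [← h1]
  congr 1
  funext g
  rw [inner_add_left, real_inner_smul_left]
  congr 1
  field_simp

theorem pac_bernstein (μ : Measure X) [IsProbabilityMeasure μ] (n : ℕ)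
    (f : EuclideanSpace ℝ (Fin d) → X → ℝ) (hfm : Measurable fun q : _ × X => f q.1 q.2)
    (hfb : ∀ v p, |f v p| ≤ 1) {l : ℝ} (hl0 : 0 < l) (hlf : ∀ v p, |l * f v p| ≤ 1 / 2)
    {s : ℝ} (hs : 0 < s) (B : ℝ) :
    (Measure.pi fun _ : Fin n => μ) {S | ∃ w : EuclideanSpace ℝ (Fin d), ‖w‖ = 1 ∧
      l * ∑ k, ∫ g, f (w + s • g) (S k) ^ 2 ∂stdGaussian (EuclideanSpace ℝ (Fin d)) +
        (1 / (2 * s ^ 2) + B) / l <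
        n * ∫ p, ∫ g, f (w + s • g) p ∂stdGaussian (EuclideanSpace ℝ (Fin d)) ∂μ -
          ∑ k, ∫ g, f (w + s • g) (S k) ∂stdGaussian (EuclideanSpace ℝ (Fin d))} ≤
      ENNReal.ofReal (Real.exp (-B)) := by
  have hmeanb : ∀ v, |∫ p, f v p ∂μ| ≤ 1 := fun v => by
    have := norm_integral_le_of_norm_le_const (μ := μ) (f := f v) (C := 1)
      (Filter.Eventually.of_forall fun p => hfb v p)
    simpa using this
  have hmeanm : Measurable fun v => ∫ p, f v p ∂μ :=
    hfm.stronglyMeasurable.integral_prod_right'.measurable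
  have hhm : Measurable fun q : EuclideanSpace ℝ (Fin d) × X =>
      l * ∫ p, f q.1 p ∂μ - l * f q.1 q.2 - l ^ 2 * f q.1 q.2 ^ 2 :=
    (((hmeanm.comp measurable_fst).const_mul l).sub (hfm.const_mul l)).sub
      ((hfm.pow_const 2).const_mul (l ^ 2))
  have hhb : ∀ v x, |l * ∫ p, f v p ∂μ - l * f v x - l ^ 2 * f v x ^ 2| ≤ l + 1 := fun v x => by
    have h1 := abs_le.1 (hlf v x)
    have h2 := abs_le.1 (hmeanb v)
    have h3 : l ^ 2 * f v x ^ 2 ≤ 1 / 2 := by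
      rw [← mul_pow, ← sq_abs]
      nlinarith [hlf v x, abs_nonneg (l * f v x)]
    have h4 : 0 ≤ l ^ 2 * f v x ^ 2 := by positivity
    have h5 := mul_le_mul_of_nonneg_left h2.1 hl0.le
    have h6 := mul_le_mul_of_nonneg_left h2.2 hl0.le
    rw [abs_le]
    constructor <;> linarith
  have hpac := pac_bayes (d := d) μ n _ hhm (l + 1) hhb
    (fun v => integral_exp_selfNormalized_le_one μ (f v) (hfm.comp measurable_prodMk_left) l
      (hlf v)) s hs B
  refine (measure_mono ?_).trans hpac
  rintro S ⟨w, hw, hlt⟩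
  refine ⟨w, hw, ?_⟩
  have hshift : Measurable fun g : EuclideanSpace ℝ (Fin d) => w + s • g := by fun_prop
  have hi1 : Integrable (fun g => ∫ p, f (w + s • g) p ∂μ)
      (stdGaussian (EuclideanSpace ℝ (Fin d))) :=
    Integrable.of_bound (hmeanm.comp hshift).aestronglyMeasurable 1
      (Filter.Eventually.of_forall fun g => hmeanb _)
  have hi2m : ∀ p, Measurable fun g => f (w + s • g) p := fun p =>
    (hfm.comp measurable_prodMk_right).comp hshift
  have hi2 : ∀ p, Integrable (fun g => f (w + s • g) p)
      (stdGaussian (EuclideanSpace ℝ (Fin d))) := fun p =>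
    Integrable.of_bound (hi2m p).aestronglyMeasurable 1
      (Filter.Eventually.of_forall fun g => hfb _ _)
  have hi3 : ∀ p, Integrable (fun g => f (w + s • g) p ^ 2)
      (stdGaussian (EuclideanSpace ℝ (Fin d))) := fun p =>
    Integrable.of_bound ((hi2m p).pow_const 2).aestronglyMeasurable 1
      (Filter.Eventually.of_forall fun g => by
        rw [Real.norm_of_nonneg (sq_nonneg _), ← sq_abs]
        exact pow_le_one₀ (abs_nonneg _) (hfb _ _))
  have hswap : ∫ g, ∫ p, f (w + s • g) p ∂μ ∂stdGaussian (EuclideanSpace ℝ (Fin d)) =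
      ∫ p, ∫ g, f (w + s • g) p ∂stdGaussian (EuclideanSpace ℝ (Fin d)) ∂μ := by
    refine integral_integral_swap (Integrable.of_bound
      (hfm.comp (f := fun q : EuclideanSpace ℝ (Fin d) × X => (w + s • q.1, q.2))
        (by fun_prop)).aestronglyMeasurable 1 (Filter.Eventually.of_forall fun q => hfb _ _))
  have hhi : ∀ k, Integrable (fun g => l * ∫ p, f (w + s • g) p ∂μ - l * f (w + s • g) (S k) -
      l ^ 2 * f (w + s • g) (S k) ^ 2) (stdGaussian (EuclideanSpace ℝ (Fin d))) := fun k =>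
    ((hi1.const_mul l).sub ((hi2 (S k)).const_mul l)).sub ((hi3 (S k)).const_mul (l ^ 2))
  have hterm : ∀ k, ∫ g, (l * ∫ p, f (w + s • g) p ∂μ - l * f (w + s • g) (S k) -
        l ^ 2 * f (w + s • g) (S k) ^ 2) ∂stdGaussian (EuclideanSpace ℝ (Fin d)) =
      l * ∫ p, ∫ g, f (w + s • g) p ∂stdGaussian (EuclideanSpace ℝ (Fin d)) ∂μ -
        l * ∫ g, f (w + s • g) (S k) ∂stdGaussian (EuclideanSpace ℝ (Fin d)) -
        l ^ 2 * ∫ g, f (w + s • g) (S k) ^ 2 ∂stdGaussian (EuclideanSpace ℝ (Fin d)) :=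
    fun k => by
    rw [integral_sub (by exact (hi1.const_mul l).sub ((hi2 (S k)).const_mul l))
      ((hi3 (S k)).const_mul (l ^ 2)), integral_sub (hi1.const_mul l) ((hi2 (S k)).const_mul l),
      integral_const_mul, integral_const_mul, integral_const_mul, hswap]
  rw [integral_finsetSum _ fun k _ => hhi k, Finset.sum_congr rfl fun k _ => hterm k,
    Finset.sum_sub_distrib, Finset.sum_sub_distrib, ← Finset.mul_sum, ← Finset.mul_sum,
    ← Finset.mul_sum, Finset.sum_const, Finset.card_univ, Fintype.card_fin, nsmul_eq_mul]
  have h2 := mul_lt_mul_of_pos_left hlt hl0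
  rw [mul_add, mul_div_cancel₀ _ hl0.ne'] at h2
  linarith

theorem level_tail_bound (μ : Measure X) [IsProbabilityMeasure μ] {n : ℕ} (hn : 1 ≤ n)
    (u : X → EuclideanSpace ℝ (Fin d)) (hu : Measurable u) (hu1 : ∀ p, ‖u p‖ ≤ 1)
    {γ : ℝ} (hγ : 0 < γ) (m j : ℕ) {l : ℝ} (hl0 : 0 < l) (hl : l ≤ 4 ^ j / 2) (B : ℝ) :
    (Measure.pi fun _ : Fin n => μ) {S | ∃ w : EuclideanSpace ℝ (Fin d), ‖w‖ = 1 ∧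
      l * (n * ((16 ^ j : ℝ)⁻¹ * empMargin u γ w S +
        2 * Real.exp (-(4 * (((m : ℝ) + 1) * 4 ^ j))))) +
        (1 / (2 * (γ * levelStd m j) ^ 2) + B) / l <
        n * ∫ p, smoothLink j (levelStd m j * ‖u p‖) (⟪w, u p⟫ / γ) ∂μ -
          ∑ k, smoothLink j (levelStd m j * ‖u (S k)‖) (⟪w, u (S k)⟫ / γ)} ≤
      ENNReal.ofReal (Real.exp (-B)) := by
  have hσ : 0 < levelStd m j := levelStd_pos m j
  have hc0 : ∀ p, 0 ≤ levelStd m j * ‖u p‖ := fun p => by positivity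
  have hc : ∀ p, (levelStd m j * ‖u p‖) ^ 2 ≤ levelStd m j ^ 2 := fun p =>
    pow_le_pow_left₀ (hc0 p) (mul_le_of_le_one_right hσ.le (hu1 p)) 2
  have hfm : Measurable fun q : EuclideanSpace ℝ (Fin d) × X =>
      chainLink j (levelStd m j * ‖u q.2‖) (⟪q.1, u q.2⟫ / γ) :=
    (measurable_chainLink j).comp
      (f := fun q : EuclideanSpace ℝ (Fin d) × X => (levelStd m j * ‖u q.2‖, ⟪q.1, u q.2⟫ / γ))
      (by fun_prop)
  have hlf : ∀ (v : EuclideanSpace ℝ (Fin d)) p,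
      |l * chainLink j (levelStd m j * ‖u p‖) (⟪v, u p⟫ / γ)| ≤ 1 / 2 := fun v p => by
    rw [abs_mul, abs_of_pos hl0]
    calc _ ≤ 4 ^ j / 2 * ((4 : ℝ) ^ j)⁻¹ :=
          mul_le_mul hl (abs_chainLink_le m j (hc p) _) (abs_nonneg _) (by positivity)
      _ = 1 / 2 := by field_simp
  have hpac := pac_bernstein (d := d) μ n
    (fun v p => chainLink j (levelStd m j * ‖u p‖) (⟪v, u p⟫ / γ)) hfm
    (fun v p => abs_chainLink_le_one _ _ _) hl0 hlf (mul_pos hγ hσ) B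
  refine (measure_mono ?_).trans hpac
  rintro S ⟨w, hw, hlt⟩
  refine ⟨w, hw, ?_⟩
  have hmean : ∀ p, ∫ g, chainLink j (levelStd m j * ‖u p‖)
        (⟪w + (γ * levelStd m j) • g, u p⟫ / γ) ∂stdGaussian (EuclideanSpace ℝ (Fin d)) =
      smoothLink j (levelStd m j * ‖u p‖) (⟪w, u p⟫ / γ) := fun p => by
    rw [← integral_chainLink j (hc0 p)]
    exact integral_gaussian_margin w (u p) hγ.ne' (levelStd m j)
      (chainLink j (levelStd m j * ‖u p‖)) (measurable_chainLink_right j _)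
  have hsq : ∀ p, ∫ g, chainLink j (levelStd m j * ‖u p‖)
        (⟪w + (γ * levelStd m j) • g, u p⟫ / γ) ^ 2 ∂stdGaussian (EuclideanSpace ℝ (Fin d)) ≤
      (if ⟪w, u p⟫ ≤ γ then (16 ^ j : ℝ)⁻¹ else 0) +
        2 * Real.exp (-(4 * (((m : ℝ) + 1) * 4 ^ j))) := fun p => by
    refine (integral_gaussian_margin w (u p) hγ.ne' (levelStd m j)
      (fun t => chainLink j (levelStd m j * ‖u p‖) t ^ 2)
      ((measurable_chainLink_right j _).pow_const 2)).trans_le ?_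
    have h2 := integral_chainLink_sq_le m j (hc0 p) (hc p) (⟪w, u p⟫ / γ)
    simpa only [div_le_one hγ] using h2
  simp only [hmean]
  have hsum := Finset.sum_le_sum fun (k : Fin n) (_ : k ∈ Finset.univ) => hsq (S k)
  rw [Finset.sum_add_distrib, sum_ite_margin hn, Finset.sum_const, Finset.card_univ,
    Fintype.card_fin, nsmul_eq_mul, ← mul_add] at hsum
  have h1 := mul_le_mul_of_nonneg_left hsum hl0.le
  linarith

end chaining

section budget

/-- Entropy and confidence budget for margin `2⁻⁽ⁱ⁺¹⁾` and empirical loss at most `2⁻ᵐ`. -/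
def chainBudget (δ : ℝ) (i m : ℕ) : ℝ :=
  147 * (4 ^ (i + 1) * ((m : ℝ) + 1)) + Real.log (Real.exp 1 / δ)

/-- Base value of the inverse temperature of the chain. -/
def chainRate (n : ℕ) (δ : ℝ) (i m : ℕ) : ℝ := √(chainBudget δ i m * 2 ^ m / n)

/-- Inverse temperature used at level `j` of the chain. -/
def chainTemp (n : ℕ) (δ : ℝ) (i m j : ℕ) : ℝ := min (4 ^ j / 2) (8 ^ j * chainRate n δ i m)

/-- Confidence spent on level `j` of the chain. -/
def chainConf (δ : ℝ) (i m j : ℕ) : ℝ := Real.log (2 ^ (i + 1) * 2 ^ (m + 1) * 2 ^ (j + 1) / δ)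

theorem one_le_log_exp_div {δ : ℝ} (h0 : 0 < δ) (h1 : δ ≤ 1) : 1 ≤ Real.log (Real.exp 1 / δ) := by
  rw [Real.log_div (Real.exp_pos 1).ne' h0.ne', Real.log_exp]
  linarith [Real.log_nonpos h0.le h1]

theorem two_pow_le_exp (k : ℕ) : (2 : ℝ) ^ k ≤ Real.exp k := by
  rw [← mul_one (k : ℝ), Real.exp_nat_mul]
  exact pow_le_pow_left₀ two_pos.le (by linarith [Real.add_one_le_exp (1 : ℝ)]) k

theorem succ_le_two_pow (k : ℕ) : (k : ℝ) + 1 ≤ 2 ^ k := by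
  exact_mod_cast Nat.lt_two_pow_self (n := k)

theorem exp_neg_level_le (m j : ℕ) :
    Real.exp (-(4 * (((m : ℝ) + 1) * 4 ^ j))) ≤ (2 ^ m)⁻¹ * (16 ^ j)⁻¹ := by
  have h1 : ((m : ℝ) + 1) * 4 ^ j ≥ ((m : ℝ) + 1) * (j + 1) := by
    have : (j : ℝ) + 1 ≤ 4 ^ j :=
      (succ_le_two_pow j).trans (pow_le_pow_left₀ two_pos.le (by norm_num) j)
    gcongr
  have h2 : (2 : ℝ) ^ (m + 4 * j) ≤ Real.exp (4 * (((m : ℝ) + 1) * 4 ^ j)) := by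
    refine (two_pow_le_exp _).trans (Real.exp_le_exp.2 ?_)
    push_cast
    have : (0 : ℝ) ≤ m * j := by positivity
    have : (0 : ℝ) ≤ m := by positivity
    nlinarith
  rw [Real.exp_neg, ← mul_inv]
  refine inv_anti₀ (by positivity) ?_
  rwa [pow_add, pow_mul, show (2 : ℝ) ^ 4 = 16 by norm_num] at h2

theorem chainBudget_pos {δ : ℝ} (h0 : 0 < δ) (h1 : δ ≤ 1) (i m : ℕ) : 0 < chainBudget δ i m := by
  have := one_le_log_exp_div h0 h1
  unfold chainBudget
  positivity

theorem chainRate_pos {n : ℕ} (hn : 1 ≤ n) {δ : ℝ} (h0 : 0 < δ) (h1 : δ ≤ 1) (i m : ℕ) :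
    0 < chainRate n δ i m := by
  have := chainBudget_pos h0 h1 i m
  unfold chainRate
  positivity

theorem chainTemp_pos {n : ℕ} (hn : 1 ≤ n) {δ : ℝ} (h0 : 0 < δ) (h1 : δ ≤ 1) (i m j : ℕ) :
    0 < chainTemp n δ i m j := by
  have := chainRate_pos hn h0 h1 i m
  exact lt_min (by positivity) (by positivity)

theorem chainConf_le {δ : ℝ} (h0 : 0 < δ) (i m j : ℕ) :
    1 / (2 * ((2 ^ (i + 1) : ℝ)⁻¹ * levelStd m j) ^ 2) + chainConf δ i m j ≤
      147 * (4 ^ (i + 1) * ((m : ℝ) + 1)) * 4 ^ j + Real.log (Real.exp 1 / δ) := by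
  have h1 : 1 / (2 * ((2 ^ (i + 1) : ℝ)⁻¹ * levelStd m j) ^ 2) =
      144 * (4 ^ (i + 1) * ((m : ℝ) + 1)) * 4 ^ j := by
    rw [mul_pow, levelStd_sq, inv_pow, ← pow_mul, mul_comm (i + 1) 2, pow_mul]
    norm_num
    field_simp
    norm_num
  have h2 : chainConf δ i m j ≤ (i + 1) + (m + 1) + (j + 1) - Real.log δ := by
    rw [chainConf, Real.log_div (by positivity) h0.ne', ← pow_add, ← pow_add]
    have := Real.log_le_log (by positivity) (two_pow_le_exp (i + 1 + (m + 1) + (j + 1)))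
    rw [Real.log_exp] at this
    push_cast at this
    linarith
  have h3 : Real.log (Real.exp 1 / δ) = 1 - Real.log δ := by
    rw [Real.log_div (Real.exp_pos 1).ne' h0.ne', Real.log_exp]
  have h4 : ∀ k : ℕ, (k : ℝ) + 1 ≤ 4 ^ k := fun k =>
    (succ_le_two_pow k).trans (pow_le_pow_left₀ two_pos.le (by norm_num) k)
  have h5 : (1 : ℝ) ≤ 4 ^ (i + 1) := one_le_pow₀ (by norm_num)
  have h6 : (1 : ℝ) ≤ 4 ^ j := one_le_pow₀ (by norm_num)
  have h7 : (1 : ℝ) ≤ (m : ℝ) + 1 := by linarith [Nat.cast_nonneg (α := ℝ) m]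
  have h8 : (i : ℝ) + 1 ≤ 4 ^ (i + 1) * ((m : ℝ) + 1) * 4 ^ j := by
    have := h4 (i + 1)
    push_cast at this
    calc (i : ℝ) + 1 ≤ 4 ^ (i + 1) * 1 * 1 := by linarith
      _ ≤ _ := by gcongr
  have h9 : (m : ℝ) + 1 ≤ 4 ^ (i + 1) * ((m : ℝ) + 1) * 4 ^ j := by
    calc (m : ℝ) + 1 = 1 * ((m : ℝ) + 1) * 1 := by ring
      _ ≤ _ := by gcongr
  have h10 : (j : ℝ) + 1 ≤ 4 ^ (i + 1) * ((m : ℝ) + 1) * 4 ^ j := by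
    calc (j : ℝ) + 1 ≤ 1 * 1 * 4 ^ j := by linarith [h4 j]
      _ ≤ _ := by gcongr
  linarith

theorem level_budget_le {n : ℕ} (hn : 1 ≤ n) {δ : ℝ} (h0 : 0 < δ) (h1 : δ ≤ 1) (i m j : ℕ)
    {q : ℝ} (hq : q ≤ (2 ^ m)⁻¹) :
    chainTemp n δ i m j *
        (n * ((16 ^ j : ℝ)⁻¹ * q + 2 * Real.exp (-(4 * (((m : ℝ) + 1) * 4 ^ j))))) +
      (1 / (2 * ((2 ^ (i + 1) : ℝ)⁻¹ * levelStd m j) ^ 2) + chainConf δ i m j) /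
        chainTemp n δ i m j ≤
      (4 * n * (chainRate n δ i m / 2 ^ m) + 2 * Real.log (Real.exp 1 / δ)) * (2 ^ j)⁻¹ +
        2 * (147 * (4 ^ (i + 1) * ((m : ℝ) + 1))) := by
  have ha := chainRate_pos hn h0 h1 i m
  have hl := chainTemp_pos hn h0 h1 i m j
  have hL := one_le_log_exp_div h0 h1
  have hn' : (0 : ℝ) < n := by positivity
  have ha2 : chainRate n δ i m ^ 2 = chainBudget δ i m * 2 ^ m / n :=
    Real.sq_sqrt (by have := chainBudget_pos h0 h1 i m; positivity)
  have hK := chainConf_le h0 i m j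
  rw [chainBudget] at ha2
  set a := chainRate n δ i m
  set l := chainTemp n δ i m j
  set L := Real.log (Real.exp 1 / δ)
  set K := 147 * (4 ^ (i + 1) * ((m : ℝ) + 1)) with hKdef
  have hK0 : 0 < K := by positivity
  have h8 : (8 : ℝ) ^ j = 2 ^ j * 4 ^ j := by rw [← mul_pow]; norm_num
  have h16 : (16 : ℝ) ^ j = 4 ^ j * 4 ^ j := by rw [← mul_pow]; norm_num
  have h4 : (4 : ℝ) ^ j = 2 ^ j * 2 ^ j := by rw [← mul_pow]; norm_num
  have first : l * (n * ((16 ^ j : ℝ)⁻¹ * q + 2 * Real.exp (-(4 * (((m : ℝ) + 1) * 4 ^ j))))) ≤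
      3 * n * (a / 2 ^ m) * (2 ^ j)⁻¹ := by
    have h2 : (16 ^ j : ℝ)⁻¹ * q + 2 * Real.exp (-(4 * (((m : ℝ) + 1) * 4 ^ j))) ≤
        3 * ((2 ^ m)⁻¹ * (16 ^ j)⁻¹) := by
      have := exp_neg_level_le m j
      have := mul_le_mul_of_nonneg_left hq (show (0 : ℝ) ≤ (16 ^ j)⁻¹ by positivity)
      linarith
    calc _ ≤ l * (n * (3 * ((2 ^ m)⁻¹ * (16 ^ j)⁻¹))) := by gcongr
      _ ≤ (8 ^ j * a) * (n * (3 * ((2 ^ m)⁻¹ * (16 ^ j)⁻¹))) := by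
          gcongr; exact min_le_right _ _
      _ = _ := by
          rw [h8, h16, h4]
          field_simp
  have hinv : 1 / l ≤ 2 / 4 ^ j + 1 / (8 ^ j * a) := by
    rcases min_choice ((4 : ℝ) ^ j / 2) (8 ^ j * a) with h | h
    · rw [show l = 4 ^ j / 2 from h, one_div_div]
      exact le_add_of_nonneg_right (by positivity)
    · rw [show l = 8 ^ j * a from h]
      exact le_add_of_nonneg_left (by positivity)
  have hKa : (K + L) / a = n * (a / 2 ^ m) := by
    rw [eq_div_iff (by positivity)] at ha2
    field_simp
    linarith
  have h4one : (1 : ℝ) ≤ 4 ^ j := one_le_pow₀ (by norm_num)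
  have second : (1 / (2 * ((2 ^ (i + 1) : ℝ)⁻¹ * levelStd m j) ^ 2) + chainConf δ i m j) / l ≤
      n * (a / 2 ^ m) * (2 ^ j)⁻¹ + 2 * L * (2 ^ j)⁻¹ + 2 * K := by
    calc _ ≤ (K * 4 ^ j + L) / l := by gcongr
      _ = (K * 4 ^ j + L) * (1 / l) := by ring
      _ ≤ (K * 4 ^ j + L) * (2 / 4 ^ j + 1 / (8 ^ j * a)) := by gcongr
      _ = (K * 4 ^ j + L * 1) * (1 / (8 ^ j * a)) + 2 * L * (4 ^ j)⁻¹ + 2 * K := by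
          field_simp; ring
      _ ≤ (K * 4 ^ j + L * 4 ^ j) * (1 / (8 ^ j * a)) + 2 * L * (2 ^ j)⁻¹ + 2 * K := by
          gcongr; norm_num
      _ = (K + L) / a * (2 ^ j)⁻¹ + 2 * L * (2 ^ j)⁻¹ + 2 * K := by
          rw [h8]; field_simp
      _ = _ := by rw [hKa]
  linarith

theorem tsum_exp_neg_chainConf {δ : ℝ} (h0 : 0 < δ) :
    ∑' (i : ℕ) (m : ℕ) (j : ℕ), ENNReal.ofReal (Real.exp (-chainConf δ i m j)) =
      ENNReal.ofReal δ := by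
  have hterm : ∀ i m j, ENNReal.ofReal (Real.exp (-chainConf δ i m j)) =
      ENNReal.ofReal δ * 2⁻¹ ^ (i + 1) * 2⁻¹ ^ (m + 1) * 2⁻¹ ^ (j + 1) := fun i m j => by
    have h2 : ∀ k : ℕ, (2⁻¹ : ENNReal) ^ k = ENNReal.ofReal (2⁻¹ ^ k) := fun k => by
      rw [ENNReal.ofReal_pow (by positivity), ENNReal.ofReal_inv_of_pos two_pos,
        ENNReal.ofReal_ofNat]
    rw [chainConf, Real.exp_neg, Real.exp_log (by positivity), h2, h2, h2,
      ← ENNReal.ofReal_mul h0.le, ← ENNReal.ofReal_mul (by positivity),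
      ← ENNReal.ofReal_mul (by positivity)]
    congr 1
    simp only [inv_pow]
    field_simp
  have hone : ∑' k : ℕ, (2⁻¹ : ENNReal) ^ (k + 1) = 1 := by
    rw [ENNReal.tsum_geometric_add_one, ENNReal.one_sub_inv_two, inv_inv]
    exact ENNReal.inv_mul_cancel two_ne_zero ENNReal.ofNat_ne_top
  simp_rw [hterm, ENNReal.tsum_mul_left, hone, mul_one, ENNReal.tsum_mul_left, hone, mul_one,
    ENNReal.tsum_mul_left, hone, mul_one]

theorem sum_inv_two_pow_le (J : ℕ) : ∑ j ∈ Finset.range (J + 1), ((2 : ℝ) ^ j)⁻¹ ≤ 2 := by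
  have : ∀ k : ℕ, ∑ j ∈ Finset.range k, ((2 : ℝ) ^ j)⁻¹ = 2 - 2 * (2 ^ k)⁻¹ := fun k => by
    induction k with
    | zero => norm_num
    | succ k ih => rw [Finset.sum_range_succ, ih, pow_succ]; field_simp; ring
  rw [this]
  linarith [show (0 : ℝ) ≤ 2 * (2 ^ (J + 1))⁻¹ by positivity]

end budget

section generalization
variable {d : ℕ} {X : Type*} [MeasurableSpace X]

theorem chain_good_event (μ : Measure X) [IsProbabilityMeasure μ] {n : ℕ} (hn : 1 ≤ n)
    (u : X → EuclideanSpace ℝ (Fin d)) (hu : Measurable u) (hu1 : ∀ p, ‖u p‖ ≤ 1)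
    {δ : ℝ} (h0 : 0 < δ) (h1 : δ ≤ 1) :
    ENNReal.ofReal (1 - δ) ≤ (Measure.pi fun _ : Fin n => μ)
      {S | ∀ (i m j : ℕ) (w : EuclideanSpace ℝ (Fin d)), ‖w‖ = 1 →
        n * ∫ p, smoothLink j (levelStd m j * ‖u p‖) (⟪w, u p⟫ / (2 ^ (i + 1))⁻¹) ∂μ -
          ∑ k, smoothLink j (levelStd m j * ‖u (S k)‖) (⟪w, u (S k)⟫ / (2 ^ (i + 1))⁻¹) ≤
        chainTemp n δ i m j *
          (n * ((16 ^ j : ℝ)⁻¹ * empMargin u (2 ^ (i + 1))⁻¹ w S +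
            2 * Real.exp (-(4 * (((m : ℝ) + 1) * 4 ^ j))))) +
        (1 / (2 * ((2 ^ (i + 1) : ℝ)⁻¹ * levelStd m j) ^ 2) + chainConf δ i m j) /
          chainTemp n δ i m j} := by
  set P := Measure.pi fun _ : Fin n => μ
  set bad : ℕ → ℕ → ℕ → Set (Fin n → X) := fun i m j =>
    {S | ∃ w : EuclideanSpace ℝ (Fin d), ‖w‖ = 1 ∧
      chainTemp n δ i m j *
          (n * ((16 ^ j : ℝ)⁻¹ * empMargin u (2 ^ (i + 1))⁻¹ w S +
            2 * Real.exp (-(4 * (((m : ℝ) + 1) * 4 ^ j))))) +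
        (1 / (2 * ((2 ^ (i + 1) : ℝ)⁻¹ * levelStd m j) ^ 2) + chainConf δ i m j) /
          chainTemp n δ i m j <
      n * ∫ p, smoothLink j (levelStd m j * ‖u p‖) (⟪w, u p⟫ / (2 ^ (i + 1))⁻¹) ∂μ -
          ∑ k, smoothLink j (levelStd m j * ‖u (S k)‖) (⟪w, u (S k)⟫ / (2 ^ (i + 1))⁻¹)}
    with hbad
  have hbound : P (⋃ (i) (m) (j), bad i m j) ≤ ENNReal.ofReal δ := by
    rw [← tsum_exp_neg_chainConf h0]
    refine (measure_iUnion_le _).trans (ENNReal.tsum_le_tsum fun i => ?_)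
    refine (measure_iUnion_le _).trans (ENNReal.tsum_le_tsum fun m => ?_)
    refine (measure_iUnion_le _).trans (ENNReal.tsum_le_tsum fun j => ?_)
    exact level_tail_bound μ hn u hu hu1 (by positivity) m j (chainTemp_pos hn h0 h1 i m j)
      (min_le_left _ _) _
  have hcompl : (⋃ (i) (m) (j), bad i m j)ᶜ ⊆ {S | ∀ (i m j : ℕ)
      (w : EuclideanSpace ℝ (Fin d)), ‖w‖ = 1 →
        n * ∫ p, smoothLink j (levelStd m j * ‖u p‖) (⟪w, u p⟫ / (2 ^ (i + 1))⁻¹) ∂μ -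
          ∑ k, smoothLink j (levelStd m j * ‖u (S k)‖) (⟪w, u (S k)⟫ / (2 ^ (i + 1))⁻¹) ≤
        chainTemp n δ i m j *
          (n * ((16 ^ j : ℝ)⁻¹ * empMargin u (2 ^ (i + 1))⁻¹ w S +
            2 * Real.exp (-(4 * (((m : ℝ) + 1) * 4 ^ j))))) +
        (1 / (2 * ((2 ^ (i + 1) : ℝ)⁻¹ * levelStd m j) ^ 2) + chainConf δ i m j) /
          chainTemp n δ i m j} := by
    intro S hS i m j w hw
    by_contra hlt
    refine hS (Set.mem_iUnion.2 ⟨i, Set.mem_iUnion.2 ⟨m, Set.mem_iUnion.2 ⟨j, ?_⟩⟩⟩)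
    exact ⟨w, hw, not_le.1 hlt⟩
  refine le_trans ?_ (measure_mono hcompl)
  rw [ENNReal.ofReal_sub 1 h0.le, ENNReal.ofReal_one, tsub_le_iff_left]
  calc (1 : ENNReal) = P Set.univ := measure_univ.symm
    _ ≤ P (⋃ (i) (m) (j), bad i m j) + P (⋃ (i) (m) (j), bad i m j)ᶜ := by
        rw [← Set.union_compl_self (⋃ (i) (m) (j), bad i m j)]
        exact measure_union_le _ _
    _ ≤ _ := by gcongr

end generalization

theorem sum_smoothStep_le {d n : ℕ} (hn : 1 ≤ n) {X : Type*}
    (u : X → EuclideanSpace ℝ (Fin d)) (hu1 : ∀ p, ‖u p‖ ≤ 1)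
    (w : EuclideanSpace ℝ (Fin d)) {γ σ : ℝ} (hγ : 0 < γ) (hσ : 0 < σ) (S : Fin n → X) :
    ∑ k, smoothStep (σ * ‖u (S k)‖) (⟪w, u (S k)⟫ / γ) ≤
      n * (empMargin u γ w S + Real.exp (-(1 / (18 * σ ^ 2)))) := by
  have hk : ∀ k ∈ Finset.univ, smoothStep (σ * ‖u (S k)‖) (⟪w, u (S k)⟫ / γ) ≤
      (if ⟪w, u (S k)⟫ ≤ γ then 1 else 0) + Real.exp (-(1 / (18 * σ ^ 2))) := fun k _ => by
    split_ifs with h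
    · exact (smoothStep_le_one _ _).trans (le_add_of_nonneg_right (Real.exp_pos _).le)
    · rw [zero_add]
      exact smoothStep_le_of_one_le hσ
        (pow_le_pow_left₀ (by positivity) (mul_le_of_le_one_right hσ.le (hu1 _)) 2)
        ((one_le_div hγ).2 (not_le.1 h).le)
  refine (Finset.sum_le_sum hk).trans_eq ?_
  rw [Finset.sum_add_distrib, sum_ite_margin hn, Finset.sum_const, Finset.card_univ,
    Fintype.card_fin, nsmul_eq_mul]
  ring

section conclusion
variable {d : ℕ} {X : Type*} [MeasurableSpace X]

theorem abs_smoothLink_le_one (j : ℕ) (c a : ℝ) : |smoothLink j c a| ≤ 1 := by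
  unfold smoothLink
  have := smoothStep_nonneg c a
  have := smoothStep_le_one c a
  have := smoothStep_nonneg (2 * c) a
  have := smoothStep_le_one (2 * c) a
  split_ifs <;> rw [abs_le] <;> constructor <;> linarith

theorem measureReal_le_integral_smoothStep (μ : Measure X) [IsProbabilityMeasure μ]
    (u : X → EuclideanSpace ℝ (Fin d)) (hu : Measurable u) (hu1 : ∀ p, ‖u p‖ ≤ 1)
    (w : EuclideanSpace ℝ (Fin d)) {γ σ : ℝ} (hγ : 0 < γ) (hσ : 0 < σ) :
    μ.real {p | ⟪w, u p⟫ ≤ 0} ≤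
      ∫ p, smoothStep (σ * ‖u p‖) (⟪w, u p⟫ / γ) ∂μ + Real.exp (-(1 / (18 * σ ^ 2))) := by
  have hm : Measurable fun p => smoothStep (σ * ‖u p‖) (⟪w, u p⟫ / γ) :=
    measurable_smoothStep.comp (f := fun p => (σ * ‖u p‖, ⟪w, u p⟫ / γ)) (by fun_prop)
  have hi : Integrable (fun p => smoothStep (σ * ‖u p‖) (⟪w, u p⟫ / γ)) μ :=
    Integrable.of_bound hm.aestronglyMeasurable 1 (Filter.Eventually.of_forall fun r => by
      rw [Real.norm_of_nonneg (smoothStep_nonneg _ _)]; exact smoothStep_le_one _ _)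
  have hset : MeasurableSet {p | ⟪w, u p⟫ ≤ 0} :=
    measurableSet_le (by fun_prop) measurable_const
  have hE : ∫ p, smoothStep (σ * ‖u p‖) (⟪w, u p⟫ / γ) ∂μ + Real.exp (-(1 / (18 * σ ^ 2))) =
      ∫ p, (smoothStep (σ * ‖u p‖) (⟪w, u p⟫ / γ) + Real.exp (-(1 / (18 * σ ^ 2)))) ∂μ := by
    rw [integral_add hi (integrable_const _)]
    simp
  rw [hE, ← integral_indicator_one hset]
  refine integral_mono ((integrable_const (1 : ℝ)).indicator hset) (hi.add (integrable_const _))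
    fun p => ?_
  by_cases hp : p ∈ {p | ⟪w, u p⟫ ≤ 0}
  · have := one_sub_smoothStep_le_of_nonpos (z := ⟪w, u p⟫ / γ) hσ
      (pow_le_pow_left₀ (by positivity) (mul_le_of_le_one_right hσ.le (hu1 p)) 2)
      (div_nonpos_of_nonpos_of_nonneg hp hγ.le)
    rw [Set.indicator_of_mem hp, Pi.one_apply]
    linarith
  · rw [Set.indicator_of_notMem hp]
    exact add_nonneg (smoothStep_nonneg _ _) (Real.exp_pos _).le

theorem measureReal_le_of_good (μ : Measure X) [IsProbabilityMeasure μ] {n : ℕ} (hn : 1 ≤ n)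
    (u : X → EuclideanSpace ℝ (Fin d)) (hu : Measurable u) (hu1 : ∀ p, ‖u p‖ ≤ 1)
    {δ : ℝ} (h0 : 0 < δ) (h1 : δ ≤ 1) (w : EuclideanSpace ℝ (Fin d)) (S : Fin n → X) (i m J : ℕ)
    (hgood : ∀ j, n * ∫ p, smoothLink j (levelStd m j * ‖u p‖) (⟪w, u p⟫ / (2 ^ (i + 1))⁻¹) ∂μ -
          ∑ k, smoothLink j (levelStd m j * ‖u (S k)‖) (⟪w, u (S k)⟫ / (2 ^ (i + 1))⁻¹) ≤
        chainTemp n δ i m j *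
          (n * ((16 ^ j : ℝ)⁻¹ * empMargin u (2 ^ (i + 1))⁻¹ w S +
            2 * Real.exp (-(4 * (((m : ℝ) + 1) * 4 ^ j))))) +
        (1 / (2 * ((2 ^ (i + 1) : ℝ)⁻¹ * levelStd m j) ^ 2) + chainConf δ i m j) /
          chainTemp n δ i m j)
    (hq : empMargin u (2 ^ (i + 1))⁻¹ w S ≤ (2 ^ m)⁻¹) :
    μ.real {p | ⟪w, u p⟫ ≤ 0} ≤ empMargin u (2 ^ (i + 1))⁻¹ w S +
      2 * Real.exp (-(16 * (((m : ℝ) + 1) * 4 ^ J))) + 8 * (chainRate n δ i m / 2 ^ m) +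
      4 * (Real.log (Real.exp 1 / δ) / n) +
      294 * (4 ^ (i + 1) * (((J : ℝ) + 1) * ((m : ℝ) + 1)) / n) := by
  have hn' : (0 : ℝ) < n := by positivity
  have hγ : (0 : ℝ) < (2 ^ (i + 1))⁻¹ := by positivity
  have hrate := chainRate_pos hn h0 h1 i m
  have hL := one_le_log_exp_div h0 h1
  have hint : ∀ j ∈ Finset.range (J + 1),
      Integrable (fun p => smoothLink j (levelStd m j * ‖u p‖) (⟪w, u p⟫ / (2 ^ (i + 1))⁻¹)) μ :=
    fun j _ => Integrable.of_bound ((measurable_smoothLink j).comp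
      (f := fun p => (levelStd m j * ‖u p‖, ⟪w, u p⟫ / (2 ^ (i + 1))⁻¹))
      (by fun_prop)).aestronglyMeasurable 1
      (Filter.Eventually.of_forall fun p => abs_smoothLink_le_one _ _ _)
  have hsum := Finset.sum_le_sum fun j (_ : j ∈ Finset.range (J + 1)) =>
    (hgood j).trans (level_budget_le hn h0 h1 i m j hq)
  rw [Finset.sum_sub_distrib, ← Finset.mul_sum, ← integral_finsetSum _ hint, Finset.sum_comm,
    Finset.sum_add_distrib, ← Finset.mul_sum, Finset.sum_const, Finset.card_range,
    nsmul_eq_mul] at hsum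
  simp only [sum_smoothLink] at hsum
  have hgeo := mul_le_mul_of_nonneg_left (sum_inv_two_pow_le J)
    (show 0 ≤ 4 * n * (chainRate n δ i m / 2 ^ m) + 2 * Real.log (Real.exp 1 / δ) by positivity)
  have htop := measureReal_le_integral_smoothStep μ u hu hu1 w hγ (levelStd_pos m J)
  have hbot := sum_smoothStep_le hn u hu1 w hγ (levelStd_pos m J) S
  have hτ : 1 / (18 * levelStd m J ^ 2) = 16 * (((m : ℝ) + 1) * 4 ^ J) := by
    rw [levelStd_sq]
    field_simp
    norm_num
  rw [hτ] at htop hbot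
  have htop' := mul_le_mul_of_nonneg_left htop hn'.le
  refine le_of_mul_le_mul_left ?_ hn'
  have e1 : n * (4 * (Real.log (Real.exp 1 / δ) / n)) = 4 * Real.log (Real.exp 1 / δ) := by
    field_simp
  have e2 : n * (294 * (4 ^ (i + 1) * (((J : ℝ) + 1) * ((m : ℝ) + 1)) / n)) =
      294 * (4 ^ (i + 1) * (((J : ℝ) + 1) * ((m : ℝ) + 1))) := by
    field_simp
  rw [mul_add, mul_add, mul_add, mul_add, e1, e2]
  push_cast at hsum
  linarith

end conclusion

section tuning

theorem exists_loss_level {q : ℝ} (hq1 : q ≤ 1) (N : ℕ) :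
    ∃ m ≤ N, q ≤ (2 ^ m)⁻¹ ∧
      (m = N ∨ ((2 : ℝ) ^ m)⁻¹ ≤ 2 * q ∧ (m : ℝ) + 1 ≤ 2 * Real.log (Real.exp 1 / q)) := by
  rcases le_or_gt q (2 ^ N)⁻¹ with h | h
  · exact ⟨N, le_rfl, h, Or.inl rfl⟩
  have hq : 0 < q := lt_trans (by positivity) h
  obtain ⟨m, hm1, hm2⟩ := exists_nat_pow_near ((one_le_inv₀ hq).2 hq1) one_lt_two
  have hN : (2 : ℝ) ^ m < 2 ^ N := hm1.trans_lt (inv_lt_of_inv_lt₀ (by positivity) h)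
  have hmN : m < N := (pow_lt_pow_iff_right₀ one_lt_two).1 hN
  refine ⟨m, hmN.le, (le_inv_comm₀ (by positivity) hq).1 hm1, Or.inr ⟨?_, ?_⟩⟩
  · have h2 := inv_lt_of_inv_lt₀ hq hm2
    rw [pow_succ, mul_inv] at h2
    linarith
  · have h2 := Real.log_le_log (by positivity) hm1
    rw [Real.log_pow, Real.log_inv] at h2
    rw [Real.log_div (Real.exp_pos 1).ne' hq.ne', Real.log_exp]
    nlinarith [Real.log_two_gt_d9, Nat.cast_nonneg (α := ℝ) m]

theorem chainRate_div_eq (n : ℕ) (δ : ℝ) (i m : ℕ) :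
    chainRate n δ i m / 2 ^ m = √(chainBudget δ i m / n * (2 ^ m)⁻¹) := by
  rw [chainRate, div_eq_iff (by positivity),
    show chainBudget δ i m * 2 ^ m / n = chainBudget δ i m / n * (2 ^ m)⁻¹ * (2 ^ m) ^ 2 by
      field_simp,
    Real.sqrt_mul' _ (by positivity), Real.sqrt_sq (by positivity)]

theorem exists_chain_tuning {n : ℕ} (hn : 1 ≤ n) {δ : ℝ} (h0 : 0 < δ) (h1 : δ ≤ 1) {γ : ℝ}
    (hγ : 0 < γ) (hM : 1 ≤ γ ^ 2 * n) {q : ℝ} (hq0 : 0 ≤ q) (hq1 : q ≤ 1) {i : ℕ}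
    (hi : 2 ^ i ≤ γ⁻¹) :
    ∃ m J : ℕ, q ≤ (2 ^ m)⁻¹ ∧
      2 * Real.exp (-(16 * (((m : ℝ) + 1) * 4 ^ J))) + 8 * (chainRate n δ i m / 2 ^ m) +
        4 * (Real.log (Real.exp 1 / δ) / n) +
        294 * (4 ^ (i + 1) * (((J : ℝ) + 1) * ((m : ℝ) + 1)) / n) ≤
      30000 * (√(q * (Real.log (Real.exp 1 / q) / (γ ^ 2 * n) + Real.log (Real.exp 1 / δ) / n)) +
        Real.log (Real.exp 1 * γ ^ 2 * n) / (γ ^ 2 * n) + Real.log (Real.exp 1 / δ) / n) := by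
  have hn' : (0 : ℝ) < n := by positivity
  have hL := one_le_log_exp_div h0 h1
  obtain ⟨N, hN1, hN2⟩ := exists_nat_pow_near hM one_lt_two
  obtain ⟨m, hmN, hqm, hm⟩ := exists_loss_level hq1 N
  refine ⟨m, N / (m + 1), hqm, ?_⟩
  rw [mul_assoc (Real.exp 1), Real.log_mul (Real.exp_pos 1).ne' (by positivity), Real.log_exp]
  have hlogM := Real.log_nonneg hM
  have hNlog : 2 * (N : ℝ) + 1 ≤ 4 * (1 + Real.log (γ ^ 2 * n)) := by
    have h2 := Real.log_le_log (by positivity) hN1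
    rw [Real.log_pow] at h2
    nlinarith [Real.log_two_gt_d9, Nat.cast_nonneg (α := ℝ) N]
  have h4i : (4 : ℝ) ^ (i + 1) / n ≤ 4 / (γ ^ 2 * n) := by
    have h := pow_le_pow_left₀ (by positivity) hi 2
    rw [← pow_mul, mul_comm i, pow_mul, inv_pow] at h
    norm_num at h
    rw [pow_succ, div_mul_eq_div_div]
    refine div_le_div_of_nonneg_right ?_ hn'.le
    rw [div_eq_mul_inv]
    linarith
  set M := γ ^ 2 * n
  set L := Real.log (Real.exp 1 / δ)
  set D := 1 + Real.log M
  have hM0 : 0 < M := by positivity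
  have hD : 1 ≤ D := by linarith
  have hDM : 1 / M ≤ D / M := div_le_div_of_nonneg_right hD hM0.le
  have hJ1 : ((N / (m + 1) : ℕ) + 1 : ℝ) * ((m : ℝ) + 1) ≤ 2 * N + 1 := by
    have : (N / (m + 1) + 1) * (m + 1) ≤ 2 * N + 1 := by
      have := Nat.div_mul_le_self N (m + 1)
      rw [add_mul]
      omega
    exact_mod_cast this
  have hJ2 : (N : ℝ) + 1 ≤ ((m : ℝ) + 1) * 4 ^ (N / (m + 1)) := by
    have h3 : N + 1 ≤ (m + 1) * (N / (m + 1) + 1) := Nat.lt_mul_div_succ N (Nat.succ_pos m)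
    have h4 : ((N / (m + 1) : ℕ) : ℝ) + 1 ≤ 4 ^ (N / (m + 1)) :=
      (succ_le_two_pow _).trans (pow_le_pow_left₀ two_pos.le (by norm_num) _)
    calc (N : ℝ) + 1 ≤ ((m : ℝ) + 1) * ((N / (m + 1) : ℕ) + 1) := by exact_mod_cast h3
      _ ≤ _ := by gcongr
  have hexp : Real.exp (-(16 * (((m : ℝ) + 1) * 4 ^ (N / (m + 1))))) ≤ 1 / M := by
    rw [Real.exp_neg, one_div]
    refine inv_anti₀ hM0 (hN2.le.trans ((two_pow_le_exp _).trans (Real.exp_le_exp.2 ?_)))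
    push_cast
    linarith [Nat.cast_nonneg (α := ℝ) N]
  have hlast : (4 : ℝ) ^ (i + 1) * (((N / (m + 1) : ℕ) + 1 : ℝ) * ((m : ℝ) + 1)) / n ≤
      16 * (D / M) := by
    calc _ = 4 ^ (i + 1) / n * (((N / (m + 1) : ℕ) + 1 : ℝ) * ((m : ℝ) + 1)) := by ring
      _ ≤ 4 / M * (4 * D) :=
          mul_le_mul h4i (hJ1.trans hNlog) (by positivity) (by positivity)
      _ = 16 * (D / M) := by ring
  have hbud : chainBudget δ i m / n ≤ 588 * (((m : ℝ) + 1) / M) + L / n := by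
    calc _ = 147 * (4 ^ (i + 1) / n) * ((m : ℝ) + 1) + L / n := by
          rw [chainBudget]; ring
      _ ≤ 147 * (4 / M) * ((m : ℝ) + 1) + L / n := by gcongr
      _ = _ := by ring
  have hbud0 : 0 < chainBudget δ i m / n := div_pos (chainBudget_pos h0 h1 i m) hn'
  have hLn : 0 ≤ L / n := by positivity
  have hrate : chainRate n δ i m / 2 ^ m ≤
      49 * √(q * (Real.log (Real.exp 1 / q) / M + L / n)) + 2400 * (D / M) + L / n := by
    rw [chainRate_div_eq]
    rcases hm with rfl | ⟨hm1, hm2⟩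
    · have hpow : ((2 : ℝ) ^ m)⁻¹ ≤ 2 / M := by
        rw [inv_le_comm₀ (by positivity) (by positivity), inv_div, div_le_iff₀ two_pos, ← pow_succ]
        exact hN2.le
      have hmD : ((m : ℝ) + 1) / M ≤ 4 * (D / M) := by
        rw [← mul_div_assoc]
        gcongr
        linarith [Nat.cast_nonneg (α := ℝ) m]
      have hamgm : √(chainBudget δ i m / n * (2 ^ m)⁻¹) ≤
          chainBudget δ i m / n + (2 ^ m)⁻¹ := by
        have hp : (0 : ℝ) < (2 ^ m)⁻¹ := by positivity
        refine Real.sqrt_le_iff.2 ⟨by positivity, ?_⟩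
        nlinarith
      have : 0 ≤ √(q * (Real.log (Real.exp 1 / q) / M + L / n)) := Real.sqrt_nonneg _
      have h2M : 2 / M = 2 * (1 / M) := by ring
      linarith
    · have hmM : ((m : ℝ) + 1) / M ≤ 2 * (Real.log (Real.exp 1 / q) / M) := by
        rw [← mul_div_assoc]
        gcongr
      have hlogq : 0 ≤ Real.log (Real.exp 1 / q) / M := by
        have : 0 ≤ ((m : ℝ) + 1) / M := by positivity
        linarith
      have hDM0 : 0 ≤ D / M := by positivity
      calc √(chainBudget δ i m / n * (2 ^ m)⁻¹)
          ≤ √(49 ^ 2 * (q * (Real.log (Real.exp 1 / q) / M + L / n))) := by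
            refine Real.sqrt_le_sqrt ?_
            calc _ ≤ (1176 * (Real.log (Real.exp 1 / q) / M + L / n)) * (2 * q) := by
                  refine mul_le_mul ?_ hm1 (by positivity) (by positivity)
                  linarith
              _ ≤ _ := by
                  have : 0 ≤ q * (Real.log (Real.exp 1 / q) / M + L / n) := by positivity
                  linarith
        _ = 49 * √(q * (Real.log (Real.exp 1 / q) / M + L / n)) := by
            rw [Real.sqrt_mul (by positivity), Real.sqrt_sq (by norm_num)]
        _ ≤ _ := by linarith
  have : 0 ≤ √(q * (Real.log (Real.exp 1 / q) / M + L / n)) := Real.sqrt_nonneg _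
  have : 0 ≤ D / M := by positivity
  linarith

end tuning

section halfspace
variable {d n : ℕ}

theorem empMargin_nonneg {X : Type*} (u : X → EuclideanSpace ℝ (Fin d)) (γ : ℝ)
    (w : EuclideanSpace ℝ (Fin d)) (S : Fin n → X) : 0 ≤ empMargin u γ w S := by
  unfold empMargin
  positivity

theorem empMargin_le_one {X : Type*} (u : X → EuclideanSpace ℝ (Fin d)) (γ : ℝ)
    (w : EuclideanSpace ℝ (Fin d)) (S : Fin n → X) : empMargin u γ w S ≤ 1 := by
  unfold empMargin
  refine div_le_one_of_le₀ ?_ (Nat.cast_nonneg n)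
  have := Finite.card_subtype_le fun i : Fin n => ⟪w, u (S i)⟫ ≤ γ
  rw [Nat.card_fin] at this
  exact_mod_cast this

theorem empMargin_mono {X : Type*} (u : X → EuclideanSpace ℝ (Fin d)) {γ γ' : ℝ} (h : γ ≤ γ')
    (w : EuclideanSpace ℝ (Fin d)) (S : Fin n → X) : empMargin u γ w S ≤ empMargin u γ' w S := by
  unfold empMargin
  gcongr
  exact Nat.card_le_card_of_injective (Subtype.map id fun i hi => le_trans hi h)
    (Subtype.map_injective _ Function.injective_id)

/-- Uniform margin bound for bounded signed features `u`. -/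
theorem margin_bound {X : Type*} [MeasurableSpace X] (μ : Measure X) [IsProbabilityMeasure μ]
    (hn : 1 ≤ n) (u : X → EuclideanSpace ℝ (Fin d)) (hu : Measurable u) (hu1 : ∀ p, ‖u p‖ ≤ 1)
    {δ : ℝ} (h0 : 0 < δ) (h1 : δ ≤ 1) :
    ENNReal.ofReal (1 - δ) ≤ (Measure.pi fun _ : Fin n => μ)
      {S | ∀ w : EuclideanSpace ℝ (Fin d), ‖w‖ = 1 → ∀ γ : ℝ, (√n)⁻¹ ≤ γ → γ ≤ 1 →
        μ.real {p | ⟪w, u p⟫ ≤ 0} ≤ empMargin u γ w S + 30000 *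
          (√(empMargin u γ w S * (Real.log (Real.exp 1 / empMargin u γ w S) / (γ ^ 2 * n) +
              Real.log (Real.exp 1 / δ) / n)) +
            Real.log (Real.exp 1 * γ ^ 2 * n) / (γ ^ 2 * n) +
            Real.log (Real.exp 1 / δ) / n)} := by
  refine (chain_good_event μ hn u hu hu1 h0 h1).trans (measure_mono ?_)
  intro S hS w hw γ hγn hγ1
  have hn' : (0 : ℝ) < n := by positivity
  have hγ : 0 < γ := lt_of_lt_of_le (by positivity) hγn
  have hM : 1 ≤ γ ^ 2 * n := by
    have := pow_le_pow_left₀ (by positivity) hγn 2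
    rw [inv_pow, Real.sq_sqrt hn'.le] at this
    rwa [← div_le_iff₀ hn', one_div]
  obtain ⟨i, hi1, hi2⟩ := exists_nat_pow_near ((one_le_inv₀ hγ).2 hγ1) one_lt_two
  obtain ⟨m, J, hqm, hle⟩ := exists_chain_tuning hn h0 h1 hγ hM (empMargin_nonneg u γ w S)
    (empMargin_le_one u γ w S) hi1
  have hmono := empMargin_mono u (inv_lt_of_inv_lt₀ hγ hi2).le w S
  have := measureReal_le_of_good μ hn u hu hu1 h0 h1 w S i m J (fun j => hS i m j w hw)
    (hmono.trans hqm)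
  linarith

/-- The signed feature vector `y • x`, truncated to the unit ball. -/
def signedFeature (p : (Fin d → ℝ) × ℝ) : EuclideanSpace ℝ (Fin d) :=
  if ‖WithLp.toLp 2 (p.2 • p.1)‖ ≤ 1 then WithLp.toLp 2 (p.2 • p.1) else 0

theorem measurable_signedFeature : Measurable (signedFeature (d := d)) := by
  have h : Measurable fun p : (Fin d → ℝ) × ℝ => WithLp.toLp 2 (p.2 • p.1) :=
    (PiLp.continuous_toLp 2 _).measurable.comp (measurable_snd.smul measurable_fst)
  exact Measurable.ite (measurableSet_le h.norm measurable_const) h measurable_const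

theorem norm_signedFeature_le_one (p : (Fin d → ℝ) × ℝ) : ‖signedFeature p‖ ≤ 1 := by
  unfold signedFeature
  split_ifs with h
  · exact h
  · simp

theorem inner_signedFeature {p : (Fin d → ℝ) × ℝ}
    (hp : (∑ j, p.1 j ^ 2) ≤ 1 ∧ (p.2 = 1 ∨ p.2 = -1)) (w : Fin d → ℝ) :
    ⟪WithLp.toLp 2 w, signedFeature p⟫ = p.2 * dotp w p.1 := by
  have hsq : p.2 ^ 2 = 1 := by rcases hp.2 with h | h <;> rw [h] <;> norm_num
  have hnorm : ‖WithLp.toLp 2 (p.2 • p.1)‖ ≤ 1 := by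
    rw [EuclideanSpace.norm_eq, Real.sqrt_le_one]
    simpa [mul_pow, hsq] using hp.1
  rw [signedFeature, if_pos hnorm, dotp, PiLp.inner_apply, Finset.mul_sum]
  refine Finset.sum_congr rfl fun j _ => ?_
  simp
  ring

end halfspace

/-- Tight generalization bound for large-margin halfspaces
(Theorem 1.2 of the paper). -/
theorem statement0 : ∃ c : ℝ, 0 < c ∧
    ∀ (d n : ℕ), 1 ≤ d → 1 ≤ n →
    ∀ δ : ℝ, 0 < δ → δ < 1 →
    ∀ D : Measure ((Fin d → ℝ) × ℝ), IsProbabilityMeasure D →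
    D {p | (∑ j, p.1 j ^ 2) ≤ 1 ∧ (p.2 = 1 ∨ p.2 = -1)} = 1 →
    ENNReal.ofReal (1 - δ) ≤ trainM D n {S |
      ∀ w : Fin d → ℝ, (∑ j, w j ^ 2) = 1 →
      ∀ γ : ℝ, (Real.sqrt n)⁻¹ ≤ γ → γ ≤ 1 →
      lossD D 0 w ≤ lossS S γ w + c *
        (Real.sqrt (lossS S γ w *
            (Real.log (Real.exp 1 / lossS S γ w) / (γ ^ 2 * n) +
              Real.log (Real.exp 1 / δ) / n)) +
          Real.log (Real.exp 1 * γ ^ 2 * n) / (γ ^ 2 * n) +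
          Real.log (Real.exp 1 / δ) / n)} := by
  refine ⟨30000, by norm_num, fun d n _ hn δ h0 h1 D hD hsupp => ?_⟩
  have hmeas : MeasurableSet {p : (Fin d → ℝ) × ℝ |
      (∑ j, p.1 j ^ 2) ≤ 1 ∧ (p.2 = 1 ∨ p.2 = -1)} :=
    (show MeasurableSet {p : (Fin d → ℝ) × ℝ | ∑ j, p.1 j ^ 2 ≤ 1} from
      measurableSet_le (by fun_prop) measurable_const).inter
      ((measurableSet_eq_fun measurable_snd measurable_const).union
        (measurableSet_eq_fun measurable_snd measurable_const))
  have hae : ∀ᵐ p ∂D, (∑ j, p.1 j ^ 2) ≤ 1 ∧ (p.2 = 1 ∨ p.2 = -1) :=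
    (prob_compl_eq_zero_iff hmeas).2 hsupp
  have haeS : ∀ᵐ S ∂Measure.pi fun _ : Fin n => D,
      ∀ k, (∑ j, (S k).1 j ^ 2) ≤ 1 ∧ ((S k).2 = 1 ∨ (S k).2 = -1) :=
    ae_all_iff.2 fun k =>
      (Measure.tendsto_eval_ae_ae (μ := fun _ : Fin n => D) (i := k)).eventually hae
  refine (margin_bound D hn signedFeature measurable_signedFeature norm_signedFeature_le_one
    h0 h1.le).trans (measure_mono_ae ?_)
  filter_upwards [haeS] with S hS hgood w hw γ hγn hγ1
  have hw' : ‖WithLp.toLp 2 w‖ = 1 := by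
    rw [EuclideanSpace.norm_eq, Real.sqrt_eq_one]
    simpa using hw
  have hD0 : lossD D 0 w = D.real {p | ⟪WithLp.toLp 2 w, signedFeature p⟫ ≤ 0} := by
    refine congrArg ENNReal.toReal (measure_congr ?_)
    filter_upwards [hae] with p hp
    refine propext ?_
    change p.2 * dotp w p.1 ≤ 0 ↔ ⟪WithLp.toLp 2 w, signedFeature p⟫ ≤ 0
    rw [inner_signedFeature hp]
  have hS0 : lossS S γ w = empMargin signedFeature γ (WithLp.toLp 2 w) S := by
    simp only [lossS, empMargin, inner_signedFeature (hS _)]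
  rw [hD0, hS0]
  exact hgood _ hw' γ hγn hγ1
end
end

section
/- There is a constant c > 1 such that for every 0 < δ < 1 and every margin interval Γ_i = (γ_i, γ_{i+1}], with probability at least 1 − δ over a training set S ∼ D^n it holds for all w ∈ H that L_S^{γ_i}(w) ≥ L_D^{(3/4)γ_i}(w)/4 − c·( ln(e·γ_{i+1}²n)/(γ_{i+1}²n) + ln(e/δ)/n ). -/
open MeasureTheory ProbabilityTheory

noncomputable section

/-- The integer combination `ε ∑ j, c j • x j`. -/
def intComb {ι : Type*} [Fintype ι] {m : ℕ} (ε : ℝ) (c : ι → ℤ) (x : ι → Fin m → ℝ) :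
    Fin m → ℝ := fun k => ε * ∑ j, (c j : ℝ) * x j k

lemma intComb_comp_perm {ι : Type*} [Fintype ι] {m : ℕ} (ε : ℝ) (c : ι → ℤ)
    (x : ι → Fin m → ℝ) (σ : Equiv.Perm ι) :
    intComb ε (c ∘ σ) (x ∘ σ) = intComb ε c x := by
  funext k
  simp only [intComb, Function.comp_apply]
  rw [Equiv.sum_comp σ fun j => (c j : ℝ) * x j k]

lemma dotp_comm {m : ℕ} (w x : Fin m → ℝ) : dotp w x = dotp x w := by
  simp [dotp, mul_comm]

lemma dotp_sub_left {m : ℕ} (u v x : Fin m → ℝ) : dotp (u - v) x = dotp u x - dotp v x := by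
  simp [dotp, sub_mul, Finset.sum_sub_distrib]

lemma dotp_smul_left {m : ℕ} (a : ℝ) (u x : Fin m → ℝ) : dotp (a • u) x = a * dotp u x := by
  simp [dotp, Finset.mul_sum, mul_assoc]

lemma dotp_self_nonneg {m : ℕ} (u : Fin m → ℝ) : 0 ≤ dotp u u :=
  Finset.sum_nonneg fun _ _ => mul_self_nonneg _

lemma dotp_sub_smul_self {m : ℕ} (a : ℝ) (u x : Fin m → ℝ) :
    dotp (u - a • x) (u - a • x) = dotp u u - 2 * a * dotp u x + a ^ 2 * dotp x x := by
  rw [dotp_sub_left, dotp_smul_left, dotp_comm u, dotp_comm x, dotp_sub_left, dotp_sub_left,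
    dotp_smul_left, dotp_smul_left, dotp_comm x u]
  ring

lemma intComb_add_single {ι : Type*} [Fintype ι] [DecidableEq ι] {m : ℕ} (ε : ℝ) (c : ι → ℤ)
    (x : ι → Fin m → ℝ) (j : ι) (s : ℤ) :
    intComb ε (c + Pi.single j s) x = intComb ε c x + (ε * s) • x j := by
  funext k
  have h : ∀ i, ((Pi.single j s : ι → ℤ) i : ℝ) * x i k = if i = j then s * x j k else 0 := by
    intro i
    by_cases hij : i = j
    · subst hij; simp
    · simp [hij]
  simp only [intComb, Pi.add_apply, Int.cast_add, add_mul, Finset.sum_add_distrib, h,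
    Finset.sum_ite_eq', Finset.mem_univ, if_true, Pi.smul_apply, smul_eq_mul]
  ring

/-- The perceptron argument: every vector of the unit ball agrees, up to `ε` on finitely many
given unit vectors, with `ε` times an integer combination of them of total weight at most
`ε⁻²`. -/
theorem exists_intComb_approx {ι : Type*} [Fintype ι] {m : ℕ} {ε : ℝ} (hε : 0 < ε)
    (x : ι → Fin m → ℝ) (hx : ∀ j, dotp (x j) (x j) ≤ 1) (w : Fin m → ℝ) (hw : dotp w w ≤ 1) :
    ∃ c : ι → ℤ, ((∑ j, (c j).natAbs : ℕ) : ℝ) * ε ^ 2 ≤ 1 ∧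
      ∀ j, |dotp w (x j) - dotp (intComb ε c x) (x j)| ≤ ε := by
  classical
  by_contra! hbad
  have step : ∀ t : ℕ, ∃ c : ι → ℤ, ∑ j, (c j).natAbs ≤ t ∧
      dotp (w - intComb ε c x) (w - intComb ε c x) ≤ 1 - t * ε ^ 2 := by
    intro t
    induction t with
    | zero =>
      refine ⟨0, by simp, ?_⟩
      have : intComb ε (0 : ι → ℤ) x = 0 := by funext k; simp [intComb]
      simpa [this] using hw
    | succ t ih =>
      obtain ⟨c, hc, hn⟩ := ih
      have h0 := dotp_self_nonneg (w - intComb ε c x)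
      have hct : ((∑ j, (c j).natAbs : ℕ) : ℝ) ≤ t := by exact_mod_cast hc
      obtain ⟨j, hj⟩ := hbad c (by nlinarith [sq_nonneg ε])
      rw [← dotp_sub_left] at hj
      obtain ⟨s, hs1, hs⟩ : ∃ s : ℤ, s.natAbs = 1 ∧ ε < s * dotp (w - intComb ε c x) (x j) := by
        rcases lt_abs.1 hj with h | h
        · exact ⟨1, rfl, by simpa using h⟩
        · exact ⟨-1, rfl, by simpa using h⟩
      have hs2 : (s : ℝ) ^ 2 = 1 := by
        rcases Int.natAbs_eq s with h | h <;> rw [h, hs1] <;> norm_num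
      refine ⟨c + Pi.single j s, ?_, ?_⟩
      · calc ∑ i, ((c + Pi.single j s : ι → ℤ) i).natAbs
            ≤ ∑ i, ((c i).natAbs + if i = j then 1 else 0) := by
              refine Finset.sum_le_sum fun i _ => ?_
              by_cases hij : i = j
              · subst hij
                simpa [hs1] using Int.natAbs_add_le (c i) s
              · simp [hij]
          _ ≤ t + 1 := by
              rw [Finset.sum_add_distrib]
              simpa using hc
      · rw [intComb_add_single, ← sub_sub, dotp_sub_smul_self]
        have : (ε * s) ^ 2 * dotp (x j) (x j) ≤ ε ^ 2 := by
          rw [mul_pow, hs2, mul_one]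
          exact mul_le_of_le_one_right (sq_nonneg _) (hx j)
        push_cast
        nlinarith [mul_lt_mul_of_pos_left hs hε]
  obtain ⟨t, ht⟩ := exists_nat_gt (1 / ε ^ 2)
  obtain ⟨c, -, hn⟩ := step t
  rw [div_lt_iff₀ (by positivity)] at ht
  linarith [dotp_self_nonneg (w - intComb ε c x)]

open Classical in
/-- The weight `a` if `P` holds, and `1` otherwise. -/
def weightIf (a : ℝ) (P : Prop) : ℝ := if P then a else 1

lemma weightIf_pos {a : ℝ} (ha : 0 < a) (P : Prop) : 0 < weightIf a P := by
  unfold weightIf; split_ifs <;> positivity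

lemma weightIf_anti {a : ℝ} (ha : a ≤ 1) {P Q : Prop} (h : P → Q) :
    weightIf a Q ≤ weightIf a P := by
  unfold weightIf; split_ifs <;> tauto

lemma weightIf_mono {a : ℝ} (ha : 1 ≤ a) {P Q : Prop} (h : P → Q) :
    weightIf a P ≤ weightIf a Q := by
  unfold weightIf; split_ifs <;> tauto

lemma prod_weightIf {n : ℕ} (a : ℝ) (P : Fin n → Prop) :
    ∏ i, weightIf a (P i) = a ^ Nat.card {i // P i} := by
  classical
  simp only [weightIf, Finset.prod_ite, Finset.prod_const, one_pow, mul_one,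
    Nat.card_eq_fintype_card, Fintype.card_subtype]

lemma measurable_weightIf {Ω : Type*} [MeasurableSpace Ω] (a : ℝ) {P : Ω → Prop}
    (hP : MeasurableSet {z | P z}) : Measurable fun z => weightIf a (P z) := by
  classical
  unfold weightIf
  exact Measurable.ite hP measurable_const measurable_const

/-- The permutation of two copies of `Fin n` exchanging the two copies of `i` when `s i`. -/
def pairSwap {n : ℕ} (s : Fin n → Bool) : Equiv.Perm (Fin n ⊕ Fin n) where
  toFun := Sum.elim (fun i => if s i then .inr i else .inl i)
    (fun i => if s i then .inl i else .inr i)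
  invFun := Sum.elim (fun i => if s i then .inr i else .inl i)
    (fun i => if s i then .inl i else .inr i)
  left_inv := by rintro (i | i) <;> cases h : s i <;> simp [h]
  right_inv := by rintro (i | i) <;> cases h : s i <;> simp [h]

lemma sum_prod_weightIf_pairSwap_le {n : ℕ} (f : Fin n ⊕ Fin n → Prop) :
    ∑ s : Fin n → Bool, ∏ i, weightIf (4 / 9) (f (pairSwap s (.inl i))) *
      weightIf (3 / 2) (f (pairSwap s (.inr i))) ≤ 2 ^ n := by
  have h := Finset.prod_univ_sum (fun _ : Fin n => (Finset.univ : Finset Bool))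
    (fun i b => weightIf (4 / 9) (f (if b then .inr i else .inl i)) *
      weightIf (3 / 2) (f (if b then .inl i else .inr i)))
  rw [Fintype.piFinset_univ] at h
  change ∑ s : Fin n → Bool, ∏ i, weightIf (4 / 9) (f (if s i then .inr i else .inl i)) *
      weightIf (3 / 2) (f (if s i then .inl i else .inr i)) ≤ 2 ^ n
  rw [← h]
  calc _ ≤ ∏ _i : Fin n, (2 : ℝ) := by
        refine Finset.prod_le_prod (fun i _ => ?_) (fun i _ => ?_)
        · exact Finset.sum_nonneg fun b _ => mul_nonneg
            (weightIf_pos (by norm_num) _).le (weightIf_pos (by norm_num) _).le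
        · simp only [Fintype.univ_bool, weightIf]
          by_cases h1 : f (.inl i) <;> by_cases h2 : f (.inr i) <;> simp [h1, h2] <;> norm_num
    _ = 2 ^ n := by simp

/-- The event that `v` has margin at most `θ` on the labeled point `p`. -/
def marginLE {m : ℕ} (θ : ℝ) (v : Fin m → ℝ) (p : (Fin m → ℝ) × ℝ) : Prop :=
  p.2 * dotp v p.1 ≤ θ

/-- The integer coefficient vectors with entries bounded by `T`. -/
def coeffBox (n T : ℕ) : Finset (Fin n ⊕ Fin n → ℤ) :=
  Fintype.piFinset fun _ => Finset.Icc (-(T : ℤ)) T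

/-- The exponential potential of a double sample, summed over integer combinations of its
points. -/
def doublePotential {m n : ℕ} (T : ℕ) (z ε θ : ℝ) (Z : Fin n ⊕ Fin n → (Fin m → ℝ) × ℝ) : ℝ :=
  ∑ c ∈ coeffBox n T, (∏ j, z ^ (c j).natAbs) *
    ∏ i, weightIf (4 / 9) (marginLE θ (intComb ε c fun j => (Z j).1) (Z (.inl i))) *
      weightIf (3 / 2) (marginLE θ (intComb ε c fun j => (Z j).1) (Z (.inr i)))

lemma doublePotential_comp_perm {m n : ℕ} (T : ℕ) (z ε θ : ℝ)
    (Z : Fin n ⊕ Fin n → (Fin m → ℝ) × ℝ) (σ : Equiv.Perm (Fin n ⊕ Fin n)) :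
    doublePotential T z ε θ (Z ∘ σ) = ∑ c ∈ coeffBox n T, (∏ j, z ^ (c j).natAbs) *
      ∏ i, weightIf (4 / 9) (marginLE θ (intComb ε c fun j => (Z j).1) (Z (σ (.inl i)))) *
        weightIf (3 / 2) (marginLE θ (intComb ε c fun j => (Z j).1) (Z (σ (.inr i)))) := by
  unfold doublePotential
  symm
  refine Finset.sum_equiv (Equiv.arrowCongr σ.symm (Equiv.refl ℤ)) ?_ ?_
  · intro c
    simp only [coeffBox, Fintype.mem_piFinset, Equiv.arrowCongr_apply, Function.comp_apply,
      Equiv.symm_symm, Equiv.refl_apply]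
    exact ⟨fun h j => h (σ j), fun h j => by simpa using h (σ.symm j)⟩
  · intro c _
    have hc : Equiv.arrowCongr σ.symm (Equiv.refl ℤ) c = c ∘ σ := rfl
    rw [hc]
    have hv : (intComb ε (c ∘ σ) fun j => ((Z ∘ σ) j).1) = intComb ε c fun j => (Z j).1 :=
      intComb_comp_perm ε c (fun j => (Z j).1) σ
    rw [hv]
    simp only [Function.comp_apply]
    rw [Equiv.prod_comp σ fun j => z ^ (c j).natAbs]

lemma sum_Icc_pow_natAbs_le {z : ℝ} (hz : 0 ≤ z) (hz' : z ≤ 1 / 3) (T : ℕ) :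
    ∑ a ∈ Finset.Icc (-(T : ℤ)) T, z ^ a.natAbs ≤ 1 + 3 * z := by
  suffices h : ∑ a ∈ Finset.Icc (-(T : ℤ)) T, z ^ a.natAbs ≤ 1 + 3 * z - 3 * z ^ (T + 1) by
    linarith [pow_nonneg hz (T + 1)]
  induction T with
  | zero => simp
  | succ T ih =>
    have hI : Finset.Icc (-((T + 1 : ℕ) : ℤ)) ((T + 1 : ℕ) : ℤ) =
        insert (-((T + 1 : ℕ) : ℤ)) (insert ((T + 1 : ℕ) : ℤ) (Finset.Icc (-(T : ℤ)) T)) := by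
      ext a; simp only [Finset.mem_Icc, Finset.mem_insert]; omega
    rw [hI, Finset.sum_insert (by simp; omega), Finset.sum_insert (by simp), Int.natAbs_neg,
      Int.natAbs_natCast, pow_succ z (T + 1)]
    nlinarith [pow_nonneg hz (T + 1)]

lemma sum_coeffBox_le {n : ℕ} {z : ℝ} (hz : 0 ≤ z) (hz' : z ≤ 1 / 3) (T : ℕ) :
    ∑ c ∈ coeffBox n T, ∏ j, z ^ (c j).natAbs ≤ Real.exp (6 * (n * z)) := by
  rw [coeffBox, ← Finset.prod_univ_sum (fun _ : Fin n ⊕ Fin n => Finset.Icc (-(T : ℤ)) T)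
    (fun _ a => z ^ a.natAbs)]
  calc _ ≤ ∏ _j : Fin n ⊕ Fin n, Real.exp (3 * z) := by
        refine Finset.prod_le_prod (fun _ _ => Finset.sum_nonneg fun _ _ => pow_nonneg hz _)
          (fun _ _ => (sum_Icc_pow_natAbs_le hz hz' T).trans ?_)
        linarith [Real.add_one_le_exp (3 * z)]
    _ = Real.exp (6 * (n * z)) := by
        rw [Finset.prod_const, ← Real.exp_nat_mul]
        congr 1
        simp
        ring

lemma doublePotential_nonneg {m n : ℕ} (T : ℕ) {z : ℝ} (hz : 0 ≤ z) (ε θ : ℝ)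
    (Z : Fin n ⊕ Fin n → (Fin m → ℝ) × ℝ) : 0 ≤ doublePotential T z ε θ Z :=
  Finset.sum_nonneg fun _ _ => mul_nonneg (Finset.prod_nonneg fun _ _ => pow_nonneg hz _)
    (Finset.prod_nonneg fun _ _ => mul_nonneg (weightIf_pos (by norm_num) _).le
      (weightIf_pos (by norm_num) _).le)

lemma measurableSet_marginLE {Ω : Type*} [MeasurableSpace Ω] {m : ℕ} (θ : ℝ)
    {v : Ω → Fin m → ℝ} {p : Ω → (Fin m → ℝ) × ℝ} (hv : Measurable v) (hp : Measurable p) :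
    MeasurableSet {a | marginLE θ (v a) (p a)} := by
  unfold marginLE dotp
  exact measurableSet_le (by fun_prop) measurable_const

lemma measurable_doublePotential {m n : ℕ} (T : ℕ) (z ε θ : ℝ) :
    Measurable (doublePotential (m := m) (n := n) T z ε θ) := by
  unfold doublePotential
  have hv : ∀ c : Fin n ⊕ Fin n → ℤ, Measurable fun Z : Fin n ⊕ Fin n → (Fin m → ℝ) × ℝ =>
      intComb ε c fun j => (Z j).1 := by
    intro c
    unfold intComb
    fun_prop
  refine Finset.measurable_sum _ fun c _ => Measurable.const_mul ?_ _
  refine Finset.measurable_prod _ fun i _ => ?_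
  exact (measurable_weightIf _ (measurableSet_marginLE θ (hv c) (measurable_pi_apply _))).mul
    (measurable_weightIf _ (measurableSet_marginLE θ (hv c) (measurable_pi_apply _)))

lemma sum_doublePotential_pairSwap_le {m n : ℕ} (T : ℕ) {z : ℝ} (hz : 0 ≤ z) (hz' : z ≤ 1 / 3)
    (ε θ : ℝ) (Z : Fin n ⊕ Fin n → (Fin m → ℝ) × ℝ) :
    ∑ s : Fin n → Bool, doublePotential T z ε θ (Z ∘ pairSwap s) ≤
      2 ^ n * Real.exp (6 * (n * z)) := by
  simp only [doublePotential_comp_perm]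
  rw [Finset.sum_comm]
  calc _ ≤ ∑ c ∈ coeffBox n T, (∏ j, z ^ (c j).natAbs) * 2 ^ n := by
        refine Finset.sum_le_sum fun c _ => ?_
        rw [← Finset.mul_sum]
        exact mul_le_mul_of_nonneg_left
          (sum_prod_weightIf_pairSwap_le fun j => marginLE θ (intComb ε c fun j => (Z j).1) (Z j))
          (Finset.prod_nonneg fun _ _ => pow_nonneg hz _)
    _ ≤ 2 ^ n * Real.exp (6 * (n * z)) := by
        rw [← Finset.sum_mul, mul_comm]
        exact mul_le_mul_of_nonneg_left (sum_coeffBox_le hz hz' T) (by positivity)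

/-- Symmetrization: the mean of the potential is bounded by averaging over pairwise swaps. -/
theorem lintegral_doublePotential_le {m n : ℕ} (D : Measure ((Fin m → ℝ) × ℝ))
    [IsProbabilityMeasure D] (T : ℕ) {z : ℝ} (hz : 0 ≤ z) (hz' : z ≤ 1 / 3) (ε θ : ℝ) :
    ∫⁻ Z, ENNReal.ofReal (doublePotential T z ε θ Z) ∂(Measure.pi fun _ : Fin n ⊕ Fin n => D) ≤
      ENNReal.ofReal (Real.exp (6 * (n * z))) := by
  set P := Measure.pi fun _ : Fin n ⊕ Fin n => D
  have hmeas := (measurable_doublePotential (m := m) (n := n) T z ε θ).ennreal_ofReal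
  have hswap : ∀ s : Fin n → Bool,
      ∫⁻ Z, ENNReal.ofReal (doublePotential T z ε θ (Z ∘ pairSwap s)) ∂P =
        ∫⁻ Z, ENNReal.ofReal (doublePotential T z ε θ Z) ∂P := by
    intro s
    have h := measurePreserving_arrowCongr' (fun _ : Fin n ⊕ Fin n => D)
      (fun _ : Fin n ⊕ Fin n => D) (pairSwap s).symm (MeasurableEquiv.refl _)
      (fun _ => MeasurePreserving.id D)
    exact h.lintegral_comp hmeas
  have hsum : (2 : ENNReal) ^ n * ∫⁻ Z, ENNReal.ofReal (doublePotential T z ε θ Z) ∂P ≤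
      2 ^ n * ENNReal.ofReal (Real.exp (6 * (n * z))) := by
    calc _ = ∑ s : Fin n → Bool,
          ∫⁻ Z, ENNReal.ofReal (doublePotential T z ε θ (Z ∘ pairSwap s)) ∂P := by
          simp [hswap]
      _ = ∫⁻ Z, ENNReal.ofReal
            (∑ s : Fin n → Bool, doublePotential T z ε θ (Z ∘ pairSwap s)) ∂P := by
          rw [← lintegral_finsetSum]
          · refine lintegral_congr fun Z => ?_
            rw [ENNReal.ofReal_sum_of_nonneg fun s _ => doublePotential_nonneg T hz ε θ _]
          · intro s _
            refine hmeas.comp ?_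
            exact measurable_pi_lambda _ fun j => measurable_pi_apply _
      _ ≤ ∫⁻ _, ENNReal.ofReal (2 ^ n * Real.exp (6 * (n * z))) ∂P :=
          lintegral_mono fun Z =>
            ENNReal.ofReal_le_ofReal (sum_doublePotential_pairSwap_le T hz hz' ε θ Z)
      _ = 2 ^ n * ENNReal.ofReal (Real.exp (6 * (n * z))) := by
          rw [lintegral_const, measure_univ, mul_one, ENNReal.ofReal_mul (by positivity),
            ENNReal.ofReal_pow (by norm_num)]
          simp
  exact (ENNReal.mul_le_mul_iff_right (by simp) (by simp)).1 hsum

/-- A vector whose margins are small on the second half and large on the first half of a double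
sample forces the potential to be large. -/
theorem le_doublePotential {m n T : ℕ} {z ε θ θlo θhi : ℝ} (hz : 0 < z) (hz' : z ≤ 1)
    (hε : 0 < ε) (hT : 1 / ε ^ 2 ≤ T) (hlo : θlo + ε ≤ θ) (hhi : θ + ε ≤ θhi)
    (Z : Fin n ⊕ Fin n → (Fin m → ℝ) × ℝ) (hx : ∀ j, dotp (Z j).1 (Z j).1 = 1)
    (hy : ∀ j, (Z j).2 = 1 ∨ (Z j).2 = -1) (w : Fin m → ℝ) (hw : dotp w w = 1) :
    z ^ (1 / ε ^ 2) * (∏ i, weightIf (4 / 9) (marginLE θhi w (Z (.inl i)))) *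
      (∏ i, weightIf (3 / 2) (marginLE θlo w (Z (.inr i)))) ≤ doublePotential T z ε θ Z := by
  obtain ⟨c, hc, hcw⟩ := exists_intComb_approx hε (fun j => (Z j).1) (fun j => (hx j).le) w hw.le
  have hc' : ((∑ j, (c j).natAbs : ℕ) : ℝ) ≤ 1 / ε ^ 2 := by
    rwa [le_div_iff₀ (by positivity)]
  have hmem : c ∈ coeffBox n T := by
    simp only [coeffBox, Fintype.mem_piFinset, Finset.mem_Icc]
    intro j
    have h1 : (c j).natAbs ≤ ∑ j, (c j).natAbs :=
      Finset.single_le_sum (f := fun j => (c j).natAbs) (fun _ _ => Nat.zero_le _)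
        (Finset.mem_univ j)
    have h2 : ∑ j, (c j).natAbs ≤ T := by exact_mod_cast hc'.trans hT
    omega
  have hmargin : ∀ j, |(Z j).2 * dotp w (Z j).1 -
      (Z j).2 * dotp (intComb ε c fun j => (Z j).1) (Z j).1| ≤ ε := by
    intro j
    have h1 : |(Z j).2| = 1 := by rcases hy j with h | h <;> simp [h]
    rw [← mul_sub, abs_mul, h1, one_mul]
    exact hcw j
  have hpow : z ^ (1 / ε ^ 2) ≤ ∏ j, z ^ (c j).natAbs := by
    rw [Finset.prod_pow_eq_pow_sum]
    exact (Real.rpow_le_rpow_of_exponent_ge hz hz' hc').trans_eq (Real.rpow_natCast _ _)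
  refine le_trans ?_ (Finset.single_le_sum (fun c _ => ?_) hmem)
  · rw [mul_assoc, ← Finset.prod_mul_distrib]
    refine mul_le_mul hpow (Finset.prod_le_prod (fun i _ => ?_) fun i _ => ?_) ?_ ?_
    · exact mul_nonneg (weightIf_pos (by norm_num) _).le (weightIf_pos (by norm_num) _).le
    · refine mul_le_mul (weightIf_anti (by norm_num) fun h => ?_)
        (weightIf_mono (by norm_num) fun h => ?_)
        (weightIf_pos (by norm_num) _).le (weightIf_pos (by norm_num) _).le
      · have := abs_le.1 (hmargin (.inl i))
        unfold marginLE at h ⊢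
        linarith
      · have := abs_le.1 (hmargin (.inr i))
        unfold marginLE at h ⊢
        linarith
    · exact Finset.prod_nonneg fun i _ =>
        mul_nonneg (weightIf_pos (by norm_num) _).le (weightIf_pos (by norm_num) _).le
    · exact Finset.prod_nonneg fun j _ => pow_nonneg hz.le _
  · exact mul_nonneg (Finset.prod_nonneg fun _ _ => pow_nonneg hz.le _)
      (Finset.prod_nonneg fun _ _ => mul_nonneg (weightIf_pos (by norm_num) _).le
        (weightIf_pos (by norm_num) _).le)

/-- The exponential moment of the number of ghost points with small margin. -/
lemma le_lintegral_prod_weightIf {m n : ℕ} (D : Measure ((Fin m → ℝ) × ℝ))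
    [IsProbabilityMeasure D] (θ : ℝ) (w : Fin m → ℝ) :
    ENNReal.ofReal ((1 + lossD D θ w / 2) ^ n) ≤
      ∫⁻ S, ENNReal.ofReal (∏ i, weightIf (3 / 2) (marginLE θ w (S i)))
        ∂(Measure.pi fun _ : Fin n => D) := by
  classical
  have hset : MeasurableSet {p : (Fin m → ℝ) × ℝ | marginLE θ w p} :=
    measurableSet_marginLE θ measurable_const measurable_id
  have hm : Measurable fun p : (Fin m → ℝ) × ℝ =>
      ENNReal.ofReal (weightIf (3 / 2) (marginLE θ w p)) :=
    (measurable_weightIf _ hset).ennreal_ofReal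
  have hone : ∫⁻ p, ENNReal.ofReal (weightIf (3 / 2) (marginLE θ w p)) ∂D =
      ENNReal.ofReal (1 + lossD D θ w / 2) := by
    have hpt : ∀ p, ENNReal.ofReal (weightIf (3 / 2) (marginLE θ w p)) =
        1 + Set.indicator {p | marginLE θ w p} (fun _ => ENNReal.ofReal (1 / 2)) p := by
      intro p
      by_cases h : marginLE θ w p
      · simp only [weightIf, h, if_true, Set.indicator, Set.mem_ofPred_eq]
        rw [← ENNReal.ofReal_one, ← ENNReal.ofReal_add (by norm_num) (by norm_num)]
        norm_num
      · simp [weightIf, h]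
    simp only [hpt]
    rw [lintegral_add_left measurable_const, lintegral_indicator_const hset, lintegral_const,
      measure_univ, ENNReal.ofReal_add (by norm_num) (by unfold lossD; positivity),
      div_eq_inv_mul (lossD D θ w), ENNReal.ofReal_mul (by norm_num), lossD,
      ENNReal.ofReal_toReal (measure_ne_top _ _)]
    simp [marginLE]
  have hind : iIndepFun (fun (i : Fin n) (S : Fin n → (Fin m → ℝ) × ℝ) =>
      ENNReal.ofReal (weightIf (3 / 2) (marginLE θ w (S i)))) (Measure.pi fun _ : Fin n => D) :=
    iIndepFun_pi (X := fun _ p => ENNReal.ofReal (weightIf (3 / 2) (marginLE θ w p)))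
      fun _ => hm.aemeasurable
  have hprod := lintegral_prod_eq_prod_lintegral_of_indepFun Finset.univ _ hind
    fun i => hm.comp (measurable_pi_apply i)
  have heval : ∀ i : Fin n, ∫⁻ S, ENNReal.ofReal (weightIf (3 / 2) (marginLE θ w (S i)))
      ∂(Measure.pi fun _ : Fin n => D) = ENNReal.ofReal (1 + lossD D θ w / 2) := by
    intro i
    rw [← hone]
    exact (measurePreserving_eval (fun _ : Fin n => D) i).lintegral_comp hm
  simp only [heval, Finset.prod_const, Finset.card_univ, Fintype.card_fin] at hprod
  rw [ENNReal.ofReal_pow (by unfold lossD; positivity), ← hprod]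
  refine lintegral_mono fun S => ?_
  rw [ENNReal.ofReal_prod_of_nonneg fun i _ => (weightIf_pos (by norm_num) _).le]

lemma ae_trainM {m n : ℕ} (D : Measure ((Fin m → ℝ) × ℝ)) [IsProbabilityMeasure D]
    {Q : (Fin m → ℝ) × ℝ → Prop} (hQ : ∀ᵐ p ∂D, Q p) : ∀ᵐ S ∂(trainM D n), ∀ i, Q (S i) :=
  Filter.eventually_all.2 fun i =>
    (Measure.quasiMeasurePreserving_eval (fun _ : Fin n => D) i).ae hQ

lemma rpow_le_pow_mul_pow {p r : ℝ} {N n : ℕ} (hp : 0 ≤ p) (hp' : p ≤ 1)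
    (h : (N : ℝ) < n * p / 4 - r) :
    (3 / 2 : ℝ) ^ (2 * r) ≤ (4 / 9) ^ N * (1 + p / 2) ^ n := by
  have h1 : (4 / 9 : ℝ) ^ N = (3 / 2 : ℝ) ^ (-2 * (N : ℝ)) := by
    rw [Real.rpow_mul (by norm_num), Real.rpow_natCast]
    congr 1
    rw [Real.rpow_neg (by norm_num)]
    norm_num
  have h2 : (3 / 2 : ℝ) ^ (p / 2) ≤ 1 + p / 2 := by
    have := rpow_one_add_le_one_add_mul_self (s := 1 / 2) (by norm_num) (p := p / 2)
      (by linarith) (by linarith)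
    norm_num at this ⊢
    linarith
  have h3 : (3 / 2 : ℝ) ^ (p / 2 * n) ≤ (1 + p / 2) ^ n := by
    rw [Real.rpow_mul (by norm_num), Real.rpow_natCast]
    exact pow_le_pow_left₀ (by positivity) h2 n
  calc (3 / 2 : ℝ) ^ (2 * r) ≤ (3 / 2 : ℝ) ^ (-2 * (N : ℝ) + p / 2 * n) :=
        Real.rpow_le_rpow_of_exponent_le (by norm_num) (by linarith)
    _ = (4 / 9) ^ N * (3 / 2 : ℝ) ^ (p / 2 * n) := by rw [Real.rpow_add (by norm_num), h1]
    _ ≤ _ := by gcongr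

/-- One-sided uniform deviation bound for margin losses of unit vectors. -/
theorem trainM_exists_card_lt_le {m n : ℕ} (D : Measure ((Fin m → ℝ) × ℝ))
    [IsProbabilityMeasure D] (hD : ∀ᵐ p ∂D, dotp p.1 p.1 = 1 ∧ (p.2 = 1 ∨ p.2 = -1))
    {z ε θ θlo θhi : ℝ} (hz : 0 < z) (hz' : z ≤ 1 / 3) (hε : 0 < ε) (hlo : θlo + ε ≤ θ)
    (hhi : θ + ε ≤ θhi) (r : ℝ) :
    trainM D n {S | ∃ w, dotp w w = 1 ∧
      (Nat.card {i // marginLE θhi w (S i)} : ℝ) < n * lossD D θlo w / 4 - r} ≤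
    ENNReal.ofReal (Real.exp (6 * (n * z)) / (z ^ (1 / ε ^ 2) * (3 / 2) ^ (2 * r))) := by
  have : IsProbabilityMeasure (trainM D n) := by unfold trainM; infer_instance
  obtain ⟨T, hT⟩ := exists_nat_ge (1 / ε ^ 2)
  set K : ℝ := z ^ (1 / ε ^ 2) * (3 / 2) ^ (2 * r) with hK
  have hKpos : 0 < K := by positivity
  set F : (Fin n → (Fin m → ℝ) × ℝ) × (Fin n → (Fin m → ℝ) × ℝ) → ENNReal := fun q =>
    ENNReal.ofReal (doublePotential T z ε θ (Sum.elim q.1 q.2)) with hF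
  have hmp := measurePreserving_sumPiEquivProdPi_symm
    (X := fun _ : Fin n ⊕ Fin n => (Fin m → ℝ) × ℝ) (fun _ => D)
  have hmeas := (measurable_doublePotential (m := m) (n := n) T z ε θ).ennreal_ofReal
  have hFeq : ∀ q, F q = ENNReal.ofReal (doublePotential T z ε θ
      ((MeasurableEquiv.sumPiEquivProdPi fun _ : Fin n ⊕ Fin n => (Fin m → ℝ) × ℝ).symm q)) := by
    intro q
    have : Sum.elim q.1 q.2 = (MeasurableEquiv.sumPiEquivProdPi
        fun _ : Fin n ⊕ Fin n => (Fin m → ℝ) × ℝ).symm q := by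
      funext j; cases j <;> rfl
    simp only [hF, this]
  have hFmeas : Measurable F := by
    rw [funext hFeq]
    exact hmeas.comp (MeasurableEquiv.measurable _)
  have hmean : ∫⁻ S, ∫⁻ S', F (S, S') ∂(trainM D n) ∂(trainM D n) ≤
      ENNReal.ofReal (Real.exp (6 * (n * z))) := by
    rw [← lintegral_prod _ hFmeas.aemeasurable]
    simp only [hFeq]
    exact (hmp.lintegral_comp hmeas).trans_le (lintegral_doublePotential_le D T hz.le hz' ε θ)
  have hae := ae_trainM (n := n) D hD
  have hsub : ∀ᵐ S ∂(trainM D n), (∃ w, dotp w w = 1 ∧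
      (Nat.card {i // marginLE θhi w (S i)} : ℝ) < n * lossD D θlo w / 4 - r) →
      ENNReal.ofReal K ≤ ∫⁻ S', F (S, S') ∂(trainM D n) := by
    filter_upwards [hae] with S hS
    rintro ⟨w, hw, hcard⟩
    set N := Nat.card {i // marginLE θhi w (S i)}
    have hp : 0 ≤ lossD D θlo w := by unfold lossD; positivity
    have hp' : lossD D θlo w ≤ 1 := by
      unfold lossD
      exact ENNReal.toReal_le_of_le_ofReal zero_le_one (by simpa using prob_le_one)
    calc ENNReal.ofReal K
        ≤ ENNReal.ofReal (z ^ (1 / ε ^ 2) * (4 / 9) ^ N * (1 + lossD D θlo w / 2) ^ n) := by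
          refine ENNReal.ofReal_le_ofReal ?_
          rw [hK, mul_assoc]
          exact mul_le_mul_of_nonneg_left (rpow_le_pow_mul_pow hp hp' hcard) (by positivity)
      _ ≤ ENNReal.ofReal (z ^ (1 / ε ^ 2) * (4 / 9) ^ N) *
            ∫⁻ S', ENNReal.ofReal (∏ i, weightIf (3 / 2) (marginLE θlo w (S' i)))
              ∂(trainM D n) := by
          rw [ENNReal.ofReal_mul (by positivity)]
          gcongr
          exact le_lintegral_prod_weightIf D θlo w
      _ = ∫⁻ S', ENNReal.ofReal (z ^ (1 / ε ^ 2) * (4 / 9) ^ N *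
            ∏ i, weightIf (3 / 2) (marginLE θlo w (S' i))) ∂(trainM D n) := by
          rw [← lintegral_const_mul']
          · refine lintegral_congr fun S' => ?_
            rw [← ENNReal.ofReal_mul (by positivity)]
          · exact ENNReal.ofReal_ne_top
      _ ≤ ∫⁻ S', F (S, S') ∂(trainM D n) := by
          refine lintegral_mono_ae ?_
          filter_upwards [hae] with S' hS'
          refine ENNReal.ofReal_le_ofReal ?_
          rw [← prod_weightIf]
          exact le_doublePotential hz (by linarith) hε hT hlo hhi (Sum.elim S S')
            (by rintro (i | i); exacts [(hS i).1, (hS' i).1])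
            (by rintro (i | i); exacts [(hS i).2, (hS' i).2]) w hw
  calc _ ≤ trainM D n {S | ENNReal.ofReal K ≤ ∫⁻ S', F (S, S') ∂(trainM D n)} :=
        measure_mono_ae hsub
    _ ≤ (∫⁻ S, ∫⁻ S', F (S, S') ∂(trainM D n) ∂(trainM D n)) / ENNReal.ofReal K :=
        meas_ge_le_lintegral_div hFmeas.lintegral_prod_right'.aemeasurable
          (by simpa using hKpos) ENNReal.ofReal_ne_top
    _ ≤ ENNReal.ofReal (Real.exp (6 * (n * z))) / ENNReal.ofReal K := by gcongr
    _ = _ := (ENNReal.ofReal_div_of_pos hKpos).symm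

lemma ae_unit_of_Xset {d : ℕ} {cγ : ℝ} (D : Measure ((Fin (d + 1) → ℝ) × ℝ))
    [IsProbabilityMeasure D] (hD : D {p | p.1 ∈ Xset d cγ ∧ (p.2 = 1 ∨ p.2 = -1)} = 1) :
    ∀ᵐ p ∂D, dotp p.1 p.1 = 1 ∧ (p.2 = 1 ∨ p.2 = -1) := by
  have hmeas : MeasurableSet
      {p : (Fin (d + 1) → ℝ) × ℝ | p.1 ∈ Xset d cγ ∧ (p.2 = 1 ∨ p.2 = -1)} := by
    unfold Xset
    have h1 : Measurable fun p : (Fin (d + 1) → ℝ) × ℝ => ∑ j, p.1 j ^ 2 := by fun_prop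
    have h2 : Measurable fun p : (Fin (d + 1) → ℝ) × ℝ => ∑ j : Fin d, p.1 j.castSucc ^ 2 := by
      fun_prop
    exact ((measurableSet_eq_fun h1 measurable_const).inter
      (measurableSet_le h2 measurable_const)).inter
      ((measurableSet_eq_fun measurable_snd measurable_const).union
        (measurableSet_eq_fun measurable_snd measurable_const))
  filter_upwards [(mem_ae_iff_prob_eq_one hmeas).2 hD] with p hp
  exact ⟨by simpa [dotp, sq] using hp.1.1, hp.2⟩

lemma exp_div_rpow_le {k a δ : ℝ} (hk : 0 ≤ k) (ha : 0 ≤ a) (hδ : 0 < δ) (hδ' : δ < 1) :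
    Real.exp (6 * k) / (Real.exp (-a) ^ (256 * k) *
      (3 / 2) ^ (2 * (1000 * (k * (1 + a) + (1 - Real.log δ))))) ≤ δ := by
  have hlog : 1 / 3 ≤ Real.log (3 / 2) := by
    have := Real.one_sub_inv_le_log_of_pos (show (0 : ℝ) < 3 / 2 by norm_num)
    norm_num at this ⊢
    linarith
  have hl : Real.log δ < 0 := Real.log_neg hδ hδ'
  rw [Real.rpow_def_of_pos (Real.exp_pos _), Real.rpow_def_of_pos (by norm_num), Real.log_exp,
    ← Real.exp_add, ← Real.exp_sub]
  conv_rhs => rw [← Real.exp_log hδ]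
  refine Real.exp_le_exp.2 ?_
  have hka : 0 ≤ k * a := mul_nonneg hk ha
  have hr : 0 ≤ k * (1 + a) + (1 - Real.log δ) := by nlinarith
  nlinarith [mul_le_mul_of_nonneg_right hlog hr]

/-- (Lemma 3.2 of the paper.) The empirical margin loss at margin `γ_i`
is at least a quarter of the distributional margin loss at margin `(3/4)γ_i`, up to an
additive error term. -/
theorem statement3 : ∃ cγ c : ℝ, 0 < cγ ∧ cγ ≤ (Real.sqrt 2)⁻¹ ∧ 1 < c ∧
    ∀ (d n : ℕ), 1 ≤ n →
    ∀ D : Measure ((Fin (d+1) → ℝ) × ℝ), IsProbabilityMeasure D →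
    D {p | p.1 ∈ Xset d cγ ∧ (p.2 = 1 ∨ p.2 = -1)} = 1 →
    ∀ δ : ℝ, 0 < δ → δ < 1 →
    ∀ i : ℕ, 1 ≤ i → (2 : ℝ) ^ i ≤ cγ * Real.sqrt n →
    ENNReal.ofReal (1 - δ) ≤ trainM D n {S |
      ∀ w, w ∈ Hset d →
      lossD D (3 / 4 * γlo n i) w / 4 - c *
          (Real.log (Real.exp 1 * γhi n i ^ 2 * n) / (γhi n i ^ 2 * n) +
            Real.log (Real.exp 1 / δ) / n) ≤ lossS S (γlo n i) w} := by
  refine ⟨1 / 2, 1000, by norm_num, ?_, by norm_num, ?_⟩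
  · rw [one_div]
    exact inv_anti₀ (by positivity) ((Real.sqrt_le_left (by norm_num)).2 (by norm_num))
  intro d n hn D hDprob hD δ hδ hδ' i hi _
  have hn0 : (0 : ℝ) < n := by exact_mod_cast hn
  have : IsProbabilityMeasure (trainM D n) := by unfold trainM; infer_instance
  have hlo2 : γlo n i ^ 2 = 4 ^ i / (4 * n) := by
    obtain ⟨j, rfl⟩ : ∃ j, i = j + 1 := ⟨i - 1, by omega⟩
    rw [γlo, div_pow, Real.sq_sqrt hn0.le, Nat.add_sub_cancel, ← pow_mul, mul_comm j, pow_mul,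
      pow_succ]
    field_simp
    norm_num [pow_succ]
  have hhi2 : γhi n i ^ 2 * n = 4 ^ i := by
    rw [γhi, div_pow, Real.sq_sqrt hn0.le, ← pow_mul, mul_comm i, pow_mul]
    field_simp
    norm_num
  have hlopos : 0 < γlo n i := by unfold γlo; positivity
  set E : ℝ := Real.log (Real.exp 1 * γhi n i ^ 2 * n) / (γhi n i ^ 2 * n) +
    Real.log (Real.exp 1 / δ) / n with hE
  set a : ℝ := i * Real.log 4 with ha
  have ha0 : 0 ≤ a := by positivity
  have hz : ((4 : ℝ) ^ i)⁻¹ = Real.exp (-a) := by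
    rw [Real.exp_neg, ha, Real.exp_nat_mul, Real.exp_log (by norm_num)]
  have hnE : n * E = n * ((4 : ℝ) ^ i)⁻¹ * (1 + a) + (1 - Real.log δ) := by
    rw [hE, mul_assoc (Real.exp 1), hhi2, Real.log_mul (Real.exp_ne_zero _) (by positivity),
      Real.log_div (Real.exp_ne_zero _) hδ.ne', Real.log_exp, Real.log_pow,
      ← ha]
    field_simp
  have hεexp : 1 / (γlo n i / 8) ^ 2 = 256 * (n * ((4 : ℝ) ^ i)⁻¹) := by
    rw [div_pow, hlo2]
    field_simp
    norm_num
  have hzle : ((4 : ℝ) ^ i)⁻¹ ≤ 1 / 3 := by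
    rw [one_div]
    refine inv_anti₀ (by norm_num) ?_
    calc (3 : ℝ) ≤ 4 ^ 1 := by norm_num
      _ ≤ 4 ^ i := pow_le_pow_right₀ (by norm_num) hi
  have hbad := trainM_exists_card_lt_le (n := n) D (ae_unit_of_Xset D hD)
    (z := ((4 : ℝ) ^ i)⁻¹) (ε := γlo n i / 8) (θ := 7 / 8 * γlo n i)
    (θlo := 3 / 4 * γlo n i) (θhi := γlo n i) (by positivity) hzle (by positivity)
    (by linarith) (by linarith) (1000 * (n * E))
  have hbound := exp_div_rpow_le (k := n * ((4 : ℝ) ^ i)⁻¹) (by positivity) ha0 hδ hδ'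
  rw [← hnE, ← hz, ← hεexp] at hbound
  replace hbad := hbad.trans (ENNReal.ofReal_le_ofReal hbound)
  set G := {S : Fin n → (Fin (d + 1) → ℝ) × ℝ | ∀ w, w ∈ Hset d →
    lossD D (3 / 4 * γlo n i) w / 4 - 1000 * E ≤ lossS S (γlo n i) w} with hG
  have hcompl : trainM D n Gᶜ ≤ ENNReal.ofReal δ := by
    refine (measure_mono ?_).trans hbad
    intro S hS
    simp only [hG, Set.mem_compl_iff, Set.mem_ofPred_eq, not_forall, not_le] at hS
    obtain ⟨w, hw, hlt⟩ := hS
    refine ⟨w, by simpa [dotp, sq] using hw.1, ?_⟩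
    rw [lossS, div_lt_iff₀ hn0] at hlt
    unfold marginLE
    linarith
  rw [ENNReal.ofReal_sub _ hδ.le, ENNReal.ofReal_one, tsub_le_iff_right]
  calc (1 : ENNReal) = trainM D n (G ∪ Gᶜ) := by rw [Set.union_compl_self, measure_univ]
    _ ≤ trainM D n G + trainM D n Gᶜ := measure_union_le _ _
    _ ≤ _ := by gcongr
end
end

section
/- There is a constant c > 0 such that for any integer k ≥ 1, any unit vectors w, x ∈ ℝ^m, and any γ ∈ (0,1], the randomized rounding satisfies Pr_{A,t}[ |⟨h_{A,t}(w), Ax⟩ − ⟨w, x⟩| > γ ] < c·exp(−γ²k/c). -/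
open MeasureTheory ProbabilityTheory

noncomputable section

/-- Randomized rounding of a single coordinate `g`, with threshold `t`. -/
def roundCoord (k : ℕ) (g t : ℝ) : ℝ :=
  if t ≤ roundProb k g then roundDown k g else roundDown k g + gridStep k

/-- The law of one row of `A` together with its rounding threshold. -/
def rowMeasure (k m : ℕ) : Measure ((Fin m → ℝ) × ℝ) :=
  (Measure.pi fun _ : Fin m => gaussianReal 0 (k : NNReal)⁻¹).prod
    (volume.restrict (Set.Icc (0 : ℝ) 1))

/-- The centred contribution of one row to `k * ⟨h(w), Ax⟩`. -/
def rowError (k : ℕ) {m : ℕ} (w x : Fin m → ℝ) (p : (Fin m → ℝ) × ℝ) : ℝ :=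
  k * (roundCoord k (dotp p.1 w) p.2 * dotp p.1 x) - dotp w x

instance isProbabilityMeasure_restrict_unitInterval :
    IsProbabilityMeasure (volume.restrict (Set.Icc (0 : ℝ) 1)) :=
  ⟨by simp⟩

instance isProbabilityMeasure_rowMeasure (k m : ℕ) : IsProbabilityMeasure (rowMeasure k m) := by
  unfold rowMeasure; infer_instance

section Rounding

variable {k : ℕ}

lemma gridStep_pos (hk : 1 ≤ k) : 0 < gridStep k := by
  have : (0 : ℝ) < k := by exact_mod_cast hk
  unfold gridStep
  positivity

lemma roundDown_le (hk : 1 ≤ k) (g : ℝ) : roundDown k g ≤ g := by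
  have hδ := gridStep_pos hk
  have h := (le_div_iff₀ hδ).1 (Int.floor_le ((g - gridStep k / 2) / gridStep k))
  unfold roundDown
  linarith

lemma lt_roundDown_add (hk : 1 ≤ k) (g : ℝ) : g < roundDown k g + gridStep k := by
  have hδ := gridStep_pos hk
  have h := (div_lt_iff₀ hδ).1 (Int.lt_floor_add_one ((g - gridStep k / 2) / gridStep k))
  unfold roundDown
  linarith

lemma roundProb_nonneg (hk : 1 ≤ k) (g : ℝ) : 0 ≤ roundProb k g := by
  have := lt_roundDown_add hk g
  have : (g - roundDown k g) / gridStep k ≤ 1 := by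
    rw [div_le_one (gridStep_pos hk)]; linarith
  unfold roundProb
  linarith

lemma roundProb_le_one (hk : 1 ≤ k) (g : ℝ) : roundProb k g ≤ 1 := by
  have : 0 ≤ (g - roundDown k g) / gridStep k :=
    div_nonneg (by linarith [roundDown_le hk g]) (gridStep_pos hk).le
  unfold roundProb
  linarith

lemma abs_roundCoord_sub_le (hk : 1 ≤ k) (g t : ℝ) : |roundCoord k g t - g| ≤ gridStep k := by
  have h1 := roundDown_le hk g
  have h2 := lt_roundDown_add hk g
  unfold roundCoord
  split_ifs <;> rw [abs_le] <;> constructor <;> linarith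

lemma measurable_roundDown : Measurable (roundDown k) := by
  unfold roundDown
  fun_prop

lemma measurable_roundCoord : Measurable fun p : ℝ × ℝ => roundCoord k p.1 p.2 := by
  have h : Measurable (roundDown k) := measurable_roundDown
  have h' : Measurable (roundProb k) := by unfold roundProb; fun_prop
  unfold roundCoord
  refine Measurable.ite (measurableSet_le measurable_snd ?_) ?_ ?_ <;> fun_prop

/-- The rounding of a coordinate is unbiased. -/
lemma integral_roundCoord (hk : 1 ≤ k) (g : ℝ) :
    ∫ t, roundCoord k g t ∂(volume.restrict (Set.Icc (0 : ℝ) 1)) = g := by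
  have h0 := roundProb_nonneg hk g
  have h1 := roundProb_le_one hk g
  have hδ := gridStep_pos hk
  have heq : ∀ t, roundCoord k g t
      = roundDown k g + (Set.Ioi (roundProb k g)).indicator (fun _ => gridStep k) t := by
    intro t
    by_cases h : t ≤ roundProb k g
    · simp [roundCoord, h]
    · simp [roundCoord, h, not_le.1 h]
  have hset : Set.Ioi (roundProb k g) ∩ Set.Icc 0 1 = Set.Ioc (roundProb k g) 1 := by
    ext t
    simp only [Set.mem_inter_iff, Set.mem_Ioi, Set.mem_Icc, Set.mem_Ioc]
    constructor
    · rintro ⟨a, -, b⟩; exact ⟨a, b⟩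
    · rintro ⟨a, b⟩; exact ⟨a, by linarith, b⟩
  simp_rw [heq]
  rw [integral_add (integrable_const _) ((integrable_const _).indicator measurableSet_Ioi),
    integral_indicator measurableSet_Ioi, Measure.restrict_restrict measurableSet_Ioi, hset]
  simp only [integral_const, measureReal_restrict_apply_univ, Real.volume_real_Icc,
    Real.volume_real_Ioc, smul_eq_mul]
  rw [max_eq_left (by norm_num), max_eq_left (by linarith)]
  unfold roundProb
  field_simp
  ring

end Rounding

section Gaussian

variable {m : ℕ}

lemma measurable_dotp_left (w : Fin m → ℝ) : Measurable fun a : Fin m → ℝ => dotp a w := by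
  unfold dotp
  fun_prop

/-- A linear form of an isotropic Gaussian vector is Gaussian. -/
lemma map_dotp_pi_gaussianReal (v : NNReal) (w : Fin m → ℝ) :
    (Measure.pi fun _ : Fin m => gaussianReal 0 v).map (fun a => dotp a w)
      = gaussianReal 0 ((∑ j, w j ^ 2).toNNReal * v) := by
  have hm := measurable_dotp_left w
  have : IsProbabilityMeasure
      ((Measure.pi fun _ : Fin m => gaussianReal 0 v).map (fun a => dotp a w)) :=
    Measure.isProbabilityMeasure_map hm.aemeasurable
  apply Measure.ext_of_charFun
  funext t
  rw [charFun_apply_real, integral_map hm.aemeasurable (by fun_prop), charFun_gaussianReal]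
  have h1 : ∀ a : Fin m → ℝ, Complex.exp (t * (dotp a w : ℝ) * Complex.I)
      = ∏ j, Complex.exp (((t * w j : ℝ) : ℂ) * (a j : ℝ) * Complex.I) := by
    intro a
    rw [← Complex.exp_sum]
    congr 1
    unfold dotp
    push_cast
    rw [Finset.mul_sum, Finset.sum_mul]
    exact Finset.sum_congr rfl fun j _ => by ring
  simp_rw [h1]
  rw [integral_fintype_prod_eq_prod
    (fun j (y : ℝ) => Complex.exp (((t * w j : ℝ) : ℂ) * (y : ℝ) * Complex.I))]
  simp_rw [← charFun_apply_real, charFun_gaussianReal]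
  rw [← Complex.exp_sum]
  congr 1
  have h2 : (((∑ j, w j ^ 2).toNNReal * v : NNReal) : ℂ)
      = (∑ j, (w j : ℂ) ^ 2) * ((v : ℝ) : ℂ) := by
    have := Real.coe_toNNReal (∑ j, w j ^ 2) (Finset.sum_nonneg fun j _ => sq_nonneg _)
    rw [show (((∑ j, w j ^ 2).toNNReal * v : NNReal) : ℂ)
      = ((((∑ j, w j ^ 2).toNNReal : ℝ) * (v : ℝ) : ℝ) : ℂ) by norm_cast, this]
    push_cast
    rfl
  rw [h2, Finset.sum_mul, Finset.sum_mul, Finset.sum_div]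
  simp only [Complex.ofReal_zero, mul_zero, zero_mul, zero_sub, Finset.sum_neg_distrib]
  exact congrArg Neg.neg (Finset.sum_congr rfl fun j _ => by push_cast; ring)

lemma memLp_dotp_pi_gaussianReal (v : NNReal) (w : Fin m → ℝ) :
    MemLp (fun a => dotp a w) 2 (Measure.pi fun _ : Fin m => gaussianReal 0 v) := by
  have h := memLp_id_gaussianReal (μ := 0) (v := (∑ j, w j ^ 2).toNNReal * v) 2
  rw [← map_dotp_pi_gaussianReal v w] at h
  exact (memLp_map_measure_iff aestronglyMeasurable_id
    (measurable_dotp_left w).aemeasurable).1 h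

lemma integral_dotp_sq_pi_gaussianReal (v : NNReal) (w : Fin m → ℝ) :
    ∫ a, dotp a w ^ 2 ∂(Measure.pi fun _ : Fin m => gaussianReal 0 v)
      = (∑ j, w j ^ 2) * v := by
  have h := variance_id_gaussianReal (μ := 0) (v := (∑ j, w j ^ 2).toNNReal * v)
  rw [variance_eq_integral aemeasurable_id] at h
  simp only [id, integral_id_gaussianReal, sub_zero] at h
  rw [← map_dotp_pi_gaussianReal v w,
    integral_map (measurable_dotp_left w).aemeasurable (by fun_prop)] at h
  rw [h, NNReal.coe_mul, Real.coe_toNNReal _ (Finset.sum_nonneg fun j _ => sq_nonneg _)]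

lemma integral_dotp_mul_dotp_pi_gaussianReal (v : NNReal) (w x : Fin m → ℝ) :
    ∫ a, dotp a w * dotp a x ∂(Measure.pi fun _ : Fin m => gaussianReal 0 v)
      = dotp w x * v := by
  have h1 : ∀ a : Fin m → ℝ, dotp a w * dotp a x
      = 4⁻¹ * (dotp a (w + x) ^ 2 - dotp a (w - x) ^ 2) := by
    intro a
    have e1 : dotp a (w + x) = dotp a w + dotp a x := by
      simp [dotp, mul_add, Finset.sum_add_distrib]
    have e2 : dotp a (w - x) = dotp a w - dotp a x := by
      simp [dotp, mul_sub, Finset.sum_sub_distrib]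
    rw [e1, e2]; ring
  simp_rw [h1]
  rw [integral_const_mul, integral_sub (memLp_dotp_pi_gaussianReal v _).integrable_sq
    (memLp_dotp_pi_gaussianReal v _).integrable_sq, integral_dotp_sq_pi_gaussianReal,
    integral_dotp_sq_pi_gaussianReal, ← sub_mul, ← mul_assoc, ← Finset.sum_sub_distrib,
    Finset.mul_sum]
  congr 1
  exact Finset.sum_congr rfl fun j _ => by simp only [Pi.add_apply, Pi.sub_apply]; ring

lemma integrable_exp_sq_div_four_gaussianReal :
    Integrable (fun y : ℝ => Real.exp (y ^ 2 / 4)) (gaussianReal 0 1) := by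
  rw [gaussianReal_of_var_ne_zero _ one_ne_zero,
    integrable_withDensity_iff_integrable_smul₀' (by fun_prop)
      (ae_of_all _ fun _ => gaussianPDF_lt_top)]
  refine ((integrable_exp_neg_mul_sq (b := 1 / 4) (by norm_num)).const_mul
    (√(2 * Real.pi))⁻¹).congr (ae_of_all _ fun y => ?_)
  simp only [toReal_gaussianPDF, gaussianPDFReal, smul_eq_mul, NNReal.coe_one, mul_one]
  rw [mul_assoc, ← Real.exp_add]
  congr 2
  ring

lemma map_dotp_pi_gaussianReal_of_unit {k : ℕ} (hk : 1 ≤ k) (w : Fin m → ℝ)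
    (hw : ∑ j, w j ^ 2 = 1) :
    (Measure.pi fun _ : Fin m => gaussianReal 0 (k : NNReal)⁻¹).map (fun a => √k * dotp a w)
      = gaussianReal 0 1 := by
  have hk0 : (k : NNReal) ≠ 0 := by exact_mod_cast (by omega : k ≠ 0)
  have : (fun a : Fin m → ℝ => √k * dotp a w) = (fun y => √k * y) ∘ fun a => dotp a w := rfl
  rw [this, ← Measure.map_map (by fun_prop) (measurable_dotp_left w), map_dotp_pi_gaussianReal,
    gaussianReal_map_const_mul, hw]
  congr 1
  · simp
  · apply NNReal.eq
    have : (k : ℝ) ≠ 0 := by exact_mod_cast hk0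
    simp [this]

end Gaussian

section MomentGeneratingFunction

lemma exp_le_one_add_add_sq_mul_exp_abs (y : ℝ) :
    Real.exp y ≤ 1 + y + y ^ 2 * Real.exp |y| := by
  have h := Complex.norm_exp_sub_sum_le_norm_mul_exp y 2
  have h2 : Complex.exp y - ∑ i ∈ Finset.range 2, (y : ℂ) ^ i / i.factorial
      = ((Real.exp y - (1 + y) : ℝ) : ℂ) := by
    simp [Finset.sum_range_succ]
  rw [h2, Complex.norm_real, Complex.norm_real, Real.norm_eq_abs, Real.norm_eq_abs, sq_abs] at h
  linarith [le_abs_self (Real.exp y - (1 + y))]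

lemma exp_mul_le_of_abs_le {s : ℝ} (hs : |s| ≤ 1 / 16) (z : ℝ) :
    Real.exp (s * z) ≤ 1 + s * z + s ^ 2 * (512 * Real.exp (|z| / 8)) := by
  have h1 := exp_le_one_add_add_sq_mul_exp_abs (s * z)
  have h2 : Real.exp |s * z| ≤ Real.exp (|z| / 16) := by
    rw [Real.exp_le_exp, abs_mul]
    nlinarith [abs_nonneg z]
  have h3 : z ^ 2 ≤ 512 * Real.exp (|z| / 16) := by
    have := Real.quadratic_le_exp_of_nonneg (x := |z| / 16) (by positivity)
    nlinarith [sq_abs z, abs_nonneg z]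
  have h4 : Real.exp (|z| / 8) = Real.exp (|z| / 16) * Real.exp (|z| / 16) := by
    rw [← Real.exp_add]; congr 1; ring
  have h5 : z ^ 2 * Real.exp |s * z| ≤ 512 * Real.exp (|z| / 16) * Real.exp (|z| / 16) := by
    gcongr
  have h6 := mul_le_mul_of_nonneg_left h5 (sq_nonneg s)
  rw [h4]
  nlinarith

variable {Ω : Type*} [MeasurableSpace Ω] {μ : Measure Ω} {X : Ω → ℝ}

lemma integrable_of_integrable_exp_abs_div (hX : Measurable X)
    (hint : Integrable (fun ω => Real.exp (|X ω| / 8)) μ) : Integrable X μ := by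
  refine (hint.const_mul 8).mono' hX.aestronglyMeasurable (ae_of_all _ fun ω => ?_)
  have := Real.add_one_le_exp (|X ω| / 8)
  rw [Real.norm_eq_abs]
  linarith

lemma integrable_exp_mul_of_integrable_exp_abs_div (hX : Measurable X)
    (hint : Integrable (fun ω => Real.exp (|X ω| / 8)) μ) {s : ℝ} (hs : |s| ≤ 1 / 16) :
    Integrable (fun ω => Real.exp (s * X ω)) μ := by
  refine hint.mono' (by fun_prop) (ae_of_all _ fun ω => ?_)
  rw [Real.norm_eq_abs, Real.abs_exp, Real.exp_le_exp]
  have := abs_mul s (X ω)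
  nlinarith [abs_nonneg (X ω), le_abs_self (s * X ω)]

/-- A centred subexponential variable has a Gaussian-type moment generating function near `0`. -/
lemma mgf_le_exp_sq_of_integrable_exp_abs_div [IsProbabilityMeasure μ] (hX : Measurable X)
    (hint : Integrable (fun ω => Real.exp (|X ω| / 8)) μ) (hmean : ∫ ω, X ω ∂μ = 0) {M : ℝ}
    (hM : ∫ ω, Real.exp (|X ω| / 8) ∂μ ≤ M) {s : ℝ} (hs : |s| ≤ 1 / 16) :
    mgf X μ s ≤ Real.exp (512 * M * s ^ 2) := by
  have hXi := integrable_of_integrable_exp_abs_div hX hint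
  have hlin : Integrable (fun ω => 1 + s * X ω) μ := (integrable_const _).add (hXi.const_mul s)
  have hquad : Integrable (fun ω => s ^ 2 * (512 * Real.exp (|X ω| / 8))) μ :=
    (hint.const_mul 512).const_mul _
  calc mgf X μ s
      ≤ ∫ ω, (1 + s * X ω) + s ^ 2 * (512 * Real.exp (|X ω| / 8)) ∂μ :=
        integral_mono (integrable_exp_mul_of_integrable_exp_abs_div hX hint hs)
          (hlin.add hquad) fun ω => exp_mul_le_of_abs_le hs (X ω)
    _ = 1 + s ^ 2 * (512 * ∫ ω, Real.exp (|X ω| / 8) ∂μ) := by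
        rw [integral_add hlin hquad, integral_add (integrable_const _) (hXi.const_mul s),
          integral_const_mul, integral_const_mul, integral_const_mul, hmean]
        simp
    _ ≤ 512 * M * s ^ 2 + 1 := by
        nlinarith [mul_le_mul_of_nonneg_left hM (sq_nonneg s)]
    _ ≤ Real.exp (512 * M * s ^ 2) := Real.add_one_le_exp _

lemma integrable_exp_mul_sum_pi [IsProbabilityMeasure μ] {k : ℕ} {s : ℝ}
    (h : Integrable (fun ω => Real.exp (s * X ω)) μ) :
    Integrable (fun ω : Fin k → Ω => Real.exp (s * ∑ i, X (ω i))) (Measure.pi fun _ => μ) := by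
  simp_rw [Finset.mul_sum, Real.exp_sum]
  exact Integrable.fintype_prod (f := fun _ ω => Real.exp (s * X ω)) fun _ => h

lemma mgf_sum_pi [IsProbabilityMeasure μ] (k : ℕ) (s : ℝ) :
    mgf (fun ω : Fin k → Ω => ∑ i, X (ω i)) (Measure.pi fun _ => μ) s = mgf X μ s ^ k := by
  unfold mgf
  simp_rw [Finset.mul_sum, Real.exp_sum]
  rw [integral_fintype_prod_eq_prod (fun _ ω => Real.exp (s * X ω))]
  simp

/-- A Bernstein-type tail bound for sums of i.i.d. centred subexponential variables. -/
lemma measureReal_pi_lt_abs_sum_le [IsProbabilityMeasure μ] {k : ℕ} (hX : Measurable X)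
    (hint : Integrable (fun ω => Real.exp (|X ω| / 8)) μ) (hmean : ∫ ω, X ω ∂μ = 0) {M D γ : ℝ}
    (hM : ∫ ω, Real.exp (|X ω| / 8) ∂μ ≤ M) (hD : 16 ≤ D) (hMD : 1024 * M ≤ D)
    (hγ : 0 ≤ γ) (hγ1 : γ ≤ 1) :
    (Measure.pi fun _ : Fin k => μ).real {ω | k * γ < |∑ i, X (ω i)|}
      ≤ 2 * Real.exp (-γ ^ 2 * k / (2 * D)) := by
  have hD0 : 0 < D := by linarith
  have hs0 : 0 ≤ γ / D := by positivity
  have hs1 : γ / D ≤ 1 / 16 := by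
    rw [div_le_div_iff₀ hD0 (by norm_num)]; linarith
  have hmgf : ∀ s : ℝ, |s| = γ / D → Integrable (fun ω : Fin k → Ω =>
        Real.exp (s * ∑ i, X (ω i))) (Measure.pi fun _ => μ) ∧
      Real.exp (-(γ / D) * (k * γ)) *
        mgf (fun ω : Fin k → Ω => ∑ i, X (ω i)) (Measure.pi fun _ => μ) s
        ≤ Real.exp (-γ ^ 2 * k / (2 * D)) := by
    intro s hs
    have hs' : |s| ≤ 1 / 16 := hs.trans_le hs1
    refine ⟨integrable_exp_mul_sum_pi
      (integrable_exp_mul_of_integrable_exp_abs_div hX hint hs'), ?_⟩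
    have h1 := mgf_le_exp_sq_of_integrable_exp_abs_div hX hint hmean hM hs'
    rw [mgf_sum_pi]
    calc _ ≤ Real.exp (-(γ / D) * (k * γ)) * Real.exp (512 * M * s ^ 2) ^ k := by
          gcongr
          exact mgf_nonneg
      _ = Real.exp (-(γ / D) * (k * γ) + k * (512 * M * s ^ 2)) := by
          rw [← Real.exp_nat_mul, ← Real.exp_add]
      _ ≤ _ := by
          rw [Real.exp_le_exp, ← sq_abs s, hs]
          have h2 : (k : ℝ) * (1024 * M * (γ / D) ^ 2) ≤ k * (D * (γ / D) ^ 2) := by gcongr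
          have h3 : (k : ℝ) * (D * (γ / D) ^ 2) = 2 * (γ ^ 2 * k / (2 * D)) := by
            field_simp
          have h4 : -(γ / D) * (k * γ) = - (2 * (γ ^ 2 * k / (2 * D))) := by
            field_simp
          have h5 : -γ ^ 2 * k / (2 * D) = -(γ ^ 2 * k / (2 * D)) := by ring
          rw [h4, h5]
          linarith
  have hsub : {ω : Fin k → Ω | k * γ < |∑ i, X (ω i)|}
      ⊆ {ω | k * γ ≤ ∑ i, X (ω i)} ∪ {ω | ∑ i, X (ω i) ≤ -(k * γ)} := by
    intro ω hω
    rcases lt_abs.1 (show k * γ < |∑ i, X (ω i)| from hω) with h | h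
    · exact Or.inl h.le
    · exact Or.inr (show ∑ i, X (ω i) ≤ -(k * γ) by linarith)
  obtain ⟨i1, b1⟩ := hmgf (γ / D) (abs_of_nonneg hs0)
  obtain ⟨i2, b2⟩ := hmgf (-(γ / D)) (by rw [abs_neg, abs_of_nonneg hs0])
  have u1 := measure_ge_le_exp_mul_mgf (k * γ) hs0 i1
  have u2 := measure_le_le_exp_mul_mgf (-(k * γ)) (neg_nonpos.2 hs0) i2
  rw [neg_neg, mul_neg, ← neg_mul (γ / D)] at u2
  have := (measureReal_mono (μ := Measure.pi fun _ : Fin k => μ) hsub).trans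
    (measureReal_union_le _ _)
  linarith

end MomentGeneratingFunction

section RowError

variable {k m : ℕ} {w x : Fin m → ℝ}

lemma measurable_rowError (w x : Fin m → ℝ) : Measurable (rowError k w x) := by
  have h1 := measurable_dotp_left w
  have h2 := measurable_dotp_left x
  have h3 : Measurable fun p : (Fin m → ℝ) × ℝ => roundCoord k (dotp p.1 w) p.2 :=
    measurable_roundCoord.comp ((h1.comp measurable_fst).prodMk measurable_snd)
  unfold rowError
  fun_prop

lemma abs_dotp_le_one (hw : ∑ j, w j ^ 2 = 1) (hx : ∑ j, x j ^ 2 = 1) : |dotp w x| ≤ 1 := by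
  have h := Finset.sum_mul_sq_le_sq_mul_sq Finset.univ w x
  rw [hw, hx, one_mul] at h
  exact (sq_le_one_iff_abs_le_one _).1 h

lemma abs_rowError_le (hk : 1 ≤ k) (hw : ∑ j, w j ^ 2 = 1) (hx : ∑ j, x j ^ 2 = 1)
    (p : (Fin m → ℝ) × ℝ) :
    |rowError k w x p| ≤ (√k * dotp p.1 w) ^ 2 + (√k * dotp p.1 x) ^ 2 + 2 := by
  have hk0 : (0 : ℝ) < k := by exact_mod_cast hk
  have hs : 0 < √(k : ℝ) := Real.sqrt_pos.2 hk0
  have hsq : √(k : ℝ) * √k = k := Real.mul_self_sqrt hk0.le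
  set g := dotp p.1 w
  set b := dotp p.1 x
  set e := roundCoord k g p.2 - g with he
  have hek : |√k * e| ≤ 1 / 10 := by
    rw [abs_mul, abs_of_pos hs]
    calc √k * |e| ≤ √k * gridStep k := by
          gcongr; exact abs_roundCoord_sub_le hk g p.2
      _ = 1 / 10 := by unfold gridStep; field_simp
  have hd := abs_dotp_le_one hw hx
  have heq : rowError k w x p = (√k * g) * (√k * b) + (√k * e) * (√k * b) - dotp w x := by
    have : roundCoord k g p.2 = g + e := by rw [he]; ring
    unfold rowError
    rw [this]
    linear_combination (-((g + e) * b)) * hsq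
  rw [heq]
  rw [abs_le] at hek hd ⊢
  have he2 : (√k * e) ^ 2 ≤ 1 / 100 := by nlinarith
  constructor
  · nlinarith [sq_nonneg (√k * g + √k * b), sq_nonneg (√k * e + √k * b), sq_nonneg (√k * g)]
  · nlinarith [sq_nonneg (√k * g - √k * b), sq_nonneg (√k * e - √k * b), sq_nonneg (√k * g)]

lemma exp_abs_rowError_div_le (hk : 1 ≤ k) (hw : ∑ j, w j ^ 2 = 1) (hx : ∑ j, x j ^ 2 = 1)
    (p : (Fin m → ℝ) × ℝ) :
    Real.exp (|rowError k w x p| / 8) ≤ Real.exp (1 / 4) / 2 *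
      (Real.exp ((√k * dotp p.1 w) ^ 2 / 4) + Real.exp ((√k * dotp p.1 x) ^ 2 / 4)) := by
  have h := abs_rowError_le hk hw hx p
  set u := (√k * dotp p.1 w) ^ 2
  set v := (√k * dotp p.1 x) ^ 2
  have h1 : Real.exp (|rowError k w x p| / 8)
      ≤ Real.exp (1 / 4) * (Real.exp (u / 8) * Real.exp (v / 8)) := by
    rw [← Real.exp_add, ← Real.exp_add, Real.exp_le_exp]
    linarith
  have h2 : Real.exp (u / 4) = Real.exp (u / 8) ^ 2 := by
    rw [← Real.exp_nat_mul]; congr 1; push_cast; ring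
  have h3 : Real.exp (v / 4) = Real.exp (v / 8) ^ 2 := by
    rw [← Real.exp_nat_mul]; congr 1; push_cast; ring
  rw [h2, h3]
  nlinarith [mul_nonneg (Real.exp_pos (1 / 4)).le
    (sq_nonneg (Real.exp (u / 8) - Real.exp (v / 8)))]

lemma integrable_exp_dotp_sq (hk : 1 ≤ k) (hw : ∑ j, w j ^ 2 = 1) :
    Integrable (fun p : (Fin m → ℝ) × ℝ => Real.exp ((√k * dotp p.1 w) ^ 2 / 4))
      (rowMeasure k m) := by
  have h := integrable_exp_sq_div_four_gaussianReal
  have hm := (measurable_dotp_left w).const_mul (√(k : ℝ))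
  rw [← map_dotp_pi_gaussianReal_of_unit hk w hw,
    integrable_map_measure (by fun_prop) hm.aemeasurable] at h
  exact h.comp_fst _

lemma integral_exp_dotp_sq (hk : 1 ≤ k) (hw : ∑ j, w j ^ 2 = 1) :
    ∫ p : (Fin m → ℝ) × ℝ, Real.exp ((√k * dotp p.1 w) ^ 2 / 4) ∂(rowMeasure k m)
      = ∫ y, Real.exp (y ^ 2 / 4) ∂(gaussianReal 0 1) := by
  have hm := (measurable_dotp_left w).const_mul (√(k : ℝ))
  rw [← map_dotp_pi_gaussianReal_of_unit hk w hw, integral_map hm.aemeasurable (by fun_prop)]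
  unfold rowMeasure
  rw [integral_fun_fst (fun a : Fin m → ℝ => Real.exp ((√k * dotp a w) ^ 2 / 4))]
  simp

lemma integrable_exp_abs_rowError_div (hk : 1 ≤ k) (hw : ∑ j, w j ^ 2 = 1)
    (hx : ∑ j, x j ^ 2 = 1) :
    Integrable (fun p => Real.exp (|rowError k w x p| / 8)) (rowMeasure k m) := by
  have hm := measurable_rowError (k := k) w x
  refine (((integrable_exp_dotp_sq hk hw).add (integrable_exp_dotp_sq hk hx)).const_mul
    (Real.exp (1 / 4) / 2)).mono' (by fun_prop) (ae_of_all _ fun p => ?_)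
  rw [Real.norm_eq_abs, Real.abs_exp]
  exact exp_abs_rowError_div_le hk hw hx p

lemma integral_exp_abs_rowError_div_le (hk : 1 ≤ k) (hw : ∑ j, w j ^ 2 = 1)
    (hx : ∑ j, x j ^ 2 = 1) :
    ∫ p, Real.exp (|rowError k w x p| / 8) ∂(rowMeasure k m)
      ≤ Real.exp (1 / 4) * ∫ y, Real.exp (y ^ 2 / 4) ∂(gaussianReal 0 1) := by
  have h1 := integrable_exp_dotp_sq hk hw
  have h2 := integrable_exp_dotp_sq hk hx
  refine (integral_mono (integrable_exp_abs_rowError_div hk hw hx)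
    ((h1.add h2).const_mul (Real.exp (1 / 4) / 2))
    fun p => exp_abs_rowError_div_le hk hw hx p).trans_eq ?_
  simp only [Pi.add_apply]
  rw [integral_const_mul, integral_add h1 h2, integral_exp_dotp_sq hk hw,
    integral_exp_dotp_sq hk hx]
  ring

lemma integral_rowError (hk : 1 ≤ k) (hw : ∑ j, w j ^ 2 = 1) (hx : ∑ j, x j ^ 2 = 1) :
    ∫ p, rowError k w x p ∂(rowMeasure k m) = 0 := by
  have hk0 : (k : ℝ) ≠ 0 := by exact_mod_cast (by omega : k ≠ 0)
  have hint := integrable_of_integrable_exp_abs_div (measurable_rowError w x)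
    (integrable_exp_abs_rowError_div hk hw hx)
  have hinner : ∀ a : Fin m → ℝ,
      ∫ t, rowError k w x (a, t) ∂(volume.restrict (Set.Icc (0 : ℝ) 1))
        = k * (dotp a w * dotp a x) - dotp w x := by
    intro a
    have hr : Integrable (fun t => roundCoord k (dotp a w) t)
        (volume.restrict (Set.Icc (0 : ℝ) 1)) := by
      refine Integrable.of_bound (measurable_roundCoord.comp
        (measurable_const.prodMk measurable_id)).aestronglyMeasurable
        (|dotp a w| + gridStep k) (ae_of_all _ fun t => ?_)
      have h := abs_roundCoord_sub_le hk (dotp a w) t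
      have h' := abs_add_le (dotp a w) (roundCoord k (dotp a w) t - dotp a w)
      rw [add_sub_cancel] at h'
      rw [Real.norm_eq_abs]
      linarith
    simp only [rowError]
    rw [integral_sub ((hr.mul_const _).const_mul _) (integrable_const _), integral_const_mul,
      integral_mul_const, integral_roundCoord hk]
    simp
  unfold rowMeasure at hint ⊢
  rw [integral_prod _ hint]
  simp_rw [hinner]
  have hmul : Integrable (fun a => dotp a w * dotp a x)
      (Measure.pi fun _ : Fin m => gaussianReal 0 (k : NNReal)⁻¹) :=
    (memLp_dotp_pi_gaussianReal _ w).integrable_mul (memLp_dotp_pi_gaussianReal _ x)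
  rw [integral_sub (hmul.const_mul _) (integrable_const _),
    integral_const_mul, integral_dotp_mul_dotp_pi_gaussianReal]
  simp
  field_simp
  simp

end RowError

lemma toReal_roundMeasure_eq_measureReal_pi {k m : ℕ} (hk : 1 ≤ k) (w x : Fin m → ℝ) (γ : ℝ) :
    (roundMeasure k m
        {p | γ < |(∑ r, hRound p.1 p.2 w r * ∑ s, p.1 r s * x s) - dotp w x|}).toReal
      = (Measure.pi fun _ : Fin k => rowMeasure k m).real
        {ω | k * γ < |∑ i, rowError k w x (ω i)|} := by
  have hk0 : (0 : ℝ) < k := by exact_mod_cast hk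
  have h := measurePreserving_arrowProdEquivProdArrow (Fin m → ℝ) ℝ (Fin k)
    (fun _ => Measure.pi fun _ : Fin m => gaussianReal 0 (k : NNReal)⁻¹)
    (fun _ => volume.restrict (Set.Icc (0 : ℝ) 1))
  unfold roundMeasure
  rw [← h.measure_preimage_equiv, Measure.real]
  congr 2
  ext ω
  have hsum : ∑ i, rowError k w x (ω i)
      = k * ((∑ r, roundCoord k (dotp (ω r).1 w) (ω r).2 * dotp (ω r).1 x) - dotp w x) := by
    unfold rowError
    rw [Finset.sum_sub_distrib, ← Finset.mul_sum]
    simp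
    ring
  show γ < |(∑ r, roundCoord k (dotp (ω r).1 w) (ω r).2 * dotp (ω r).1 x) - dotp w x| ↔
    k * γ < |∑ i, rowError k w x (ω i)|
  rw [hsum, abs_mul, abs_of_pos hk0, mul_lt_mul_iff_right₀ hk0]

/-- (Lemma 3.5 of the paper.) The randomized rounding approximately
preserves inner products: `|⟨h_{A,t}(w), Ax⟩ - ⟨w,x⟩| > γ` with probability at most
`c·exp(-γ²k/c)` for unit vectors `w, x`. -/
theorem statement6 : ∃ c : ℝ, 0 < c ∧
    ∀ (k m : ℕ), 1 ≤ k →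
    ∀ w x : Fin m → ℝ, (∑ j, w j ^ 2) = 1 → (∑ j, x j ^ 2) = 1 →
    ∀ γ : ℝ, 0 < γ → γ ≤ 1 →
    (roundMeasure k m
        {p | γ < |(∑ r, hRound p.1 p.2 w r * ∑ s, p.1 r s * x s) - dotp w x|}).toReal <
      c * Real.exp (-γ ^ 2 * k / c) := by
  set M : ℝ := Real.exp (1 / 4) * ∫ y, Real.exp (y ^ 2 / 4) ∂(gaussianReal 0 1)
  set D : ℝ := max 16 (1024 * M)
  have hD : 16 ≤ D := le_max_left _ _
  refine ⟨2 * D, by linarith, fun k m hk w x hw hx γ hγ hγ1 => ?_⟩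
  rw [toReal_roundMeasure_eq_measureReal_pi hk]
  refine (measureReal_pi_lt_abs_sum_le (measurable_rowError w x)
    (integrable_exp_abs_rowError_div hk hw hx) (integral_rowError hk hw hx)
    (integral_exp_abs_rowError_div_le hk hw hx) hD (le_max_right _ _) hγ.le hγ1).trans_lt ?_
  gcongr
  linarith
end
end
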